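/- Suppose the lattice operator H is stable and admits a lattice Green's function 𝒢. Let p, α ∈ ℕ₀, c > 0, and let u ∈ 𝓗¹ satisfy |H[u](ℓ)| ≤ c⟨ℓ⟩^{−d−p}(log⟨ℓ⟩)^α for all ℓ ∈ Λ. Let 𝒮 ⊂ Λ be a lattice basis. Then there exist symmetric arrays b^{(i,k)} ∈ (ℝ^𝒮)^{⊙i} for 0 ≤ i ≤ p−1 and 1 ≤ k ≤ N such that the remainder w := u − ∑_{i=0}^{p−1}∑_{k=1}^{N} b^{(i,k)} : D_𝒮^i 𝒢_k satisfies, for each j ∈ {1,2}, |D^j w(ℓ)| ≤ C⟨ℓ⟩^{2−d−p−j}(log⟨ℓ⟩)^{α+1} for all ℓ ∈ Λ and some constant C. For j ≥ 3 the same bound holds provided additionally |D^m H[u](ℓ)| ≤ c⟨ℓ⟩^{−d−p−m}(log⟨ℓ⟩)^α for all ℓ and m = 1,…,j−2. -/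

import Mathlib

noncomputable section

open scoped BigOperators
open MeasureTheory Filter Topology

namespace Defect

abbrev Vec (n : ℕ) : Type := Fin n → ℝ

/-- Euclidean norm of a vector in `ℝ^n`. -/
def enorm {n : ℕ} (v : Vec n) : ℝ := Real.sqrt (∑ i, (v i) ^ 2)

/-- `⟨x⟩ := |x| + 2`. -/
def ang {n : ℕ} (v : Vec n) : ℝ := enorm v + 2

def dotV {n : ℕ} (x y : Vec n) : ℝ := ∑ i, x i * y i

/-- Matrix-vector product for a plain `Fin N → Fin N → ℝ` matrix. -/
def mulV {N : ℕ} (M : Fin N → Fin N → ℝ) (v : Vec N) : Vec N := fun i => ∑ j, M i j * v j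

/-- Euclidean (Frobenius) norm of an `N × N` array. -/
def mnorm {N : ℕ} (M : Fin N → Fin N → ℝ) : ℝ := Real.sqrt (∑ i, ∑ j, (M i j) ^ 2)

/-- The lattice point `A z` for `z ∈ ℤ^d`. -/
def latticePt (d : ℕ) (A : Matrix (Fin d) (Fin d) ℝ) (z : Fin d → ℤ) : Vec d :=
  fun i => ∑ j, A i j * (z j : ℝ)

/-- The Bravais lattice `Λ = A ℤ^d`. -/
def Lattice (d : ℕ) (A : Matrix (Fin d) (Fin d) ℝ) : Set (Vec d) :=
  Set.range (latticePt d A)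

/-- First-order finite difference `D_ρ u (ℓ) = u(ℓ+ρ) - u(ℓ)`. -/
def D1 {d : ℕ} {M : Type} [AddCommGroup M] (ρ : Vec d) (u : Vec d → M) (ℓ : Vec d) : M :=
  u (ℓ + ρ) - u ℓ

/-- Iterated finite difference `D_{ρ₁} ⋯ D_{ρ_j} u (ℓ)` (closed form). -/
def Dmulti {d : ℕ} {M : Type} [AddCommGroup M] [Module ℝ M] {j : ℕ}
    (ρs : Fin j → Vec d) (u : Vec d → M) (ℓ : Vec d) : M :=
  ∑ S : Finset (Fin j), ((-1 : ℝ) ^ (j - S.card)) • u (ℓ + ∑ i ∈ S, ρs i)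

/-- `|Du(ℓ)|²`, the squared Euclidean norm of the stencil of first differences. -/
def Dnorm1Sq {d N : ℕ} (R : Finset (Vec d)) (u : Vec d → Vec N) (ℓ : Vec d) : ℝ :=
  ∑ ρ ∈ R, (enorm (D1 ρ u ℓ)) ^ 2

/-- `|D^j u(ℓ)|`, the Euclidean norm of the array `(D_{ρ⃗} u(ℓ))_{ρ⃗ ∈ R^j}`. -/
def DnormJ {d N : ℕ} (R : Finset (Vec d)) (j : ℕ) (u : Vec d → Vec N) (ℓ : Vec d) : ℝ :=
  Real.sqrt (∑ ρs : Fin j → {x // x ∈ R},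
    (enorm (Dmulti (fun i => (ρs i : Vec d)) u ℓ)) ^ 2)

/-- The linearized lattice operator
`H[u](ℓ) = ∑_{σ,ρ∈R} (C_{σρ} D_ρ u(ℓ-σ) - C_{σρ} D_ρ u(ℓ))`. -/
def Hop (d N : ℕ) (R : Finset (Vec d)) (C : Vec d → Vec d → Fin N → Fin N → ℝ)
    (u : Vec d → Vec N) (ℓ : Vec d) : Vec N :=
  ∑ σ ∈ R, ∑ ρ ∈ R, (mulV (C σ ρ) (D1 ρ u (ℓ - σ)) - mulV (C σ ρ) (D1 ρ u ℓ))

/-- `u ∈ 𝓗¹`. -/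
def InH1 {d N : ℕ} (A : Matrix (Fin d) (Fin d) ℝ) (R : Finset (Vec d))
    (u : Vec d → Vec N) : Prop :=
  Summable fun z : Fin d → ℤ => Dnorm1Sq R u (latticePt d A z)

/-- `u ∈ 𝓗ᶜ` : the stencil `Du` has bounded support on the lattice. -/
def InHc {d N : ℕ} (A : Matrix (Fin d) (Fin d) ℝ) (R : Finset (Vec d))
    (u : Vec d → Vec N) : Prop :=
  ∃ rad : ℝ, ∀ z : Fin d → ℤ, rad ≤ enorm (latticePt d A z) →
    ∀ ρ ∈ R, D1 ρ u (latticePt d A z) = 0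

/-- Stability of the lattice operator `H`. -/
def IsStable (d N : ℕ) (A : Matrix (Fin d) (Fin d) ℝ) (R : Finset (Vec d))
    (C : Vec d → Vec d → Fin N → Fin N → ℝ) : Prop :=
  ∃ c₀ : ℝ, 0 < c₀ ∧ ∀ u : Vec d → Vec N, InHc A R u →
    c₀ * (∑' z : Fin d → ℤ, Dnorm1Sq R u (latticePt d A z)) ≤
      ∑' z : Fin d → ℤ, ∑ σ ∈ R, ∑ ρ ∈ R,
        dotV (D1 σ u (latticePt d A z)) (mulV (C σ ρ) (D1 ρ u (latticePt d A z)))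

/-- `k`-th column of a matrix-valued function. -/
def col {d N : ℕ} (G : Vec d → Fin N → Fin N → ℝ) (k : Fin N) : Vec d → Vec N :=
  fun x i => G x i k

/-- `|D^j 𝒢(ℓ)|` for matrix-valued `𝒢`. -/
def DnormJmat {d N : ℕ} (R : Finset (Vec d)) (j : ℕ)
    (G : Vec d → Fin N → Fin N → ℝ) (ℓ : Vec d) : ℝ :=
  Real.sqrt (∑ k : Fin N, (DnormJ R j (col G k) ℓ) ^ 2)

/-- `𝒢` is a lattice Green's function for `H`. -/
def IsLatticeGreen (d N : ℕ) (A : Matrix (Fin d) (Fin d) ℝ) (R : Finset (Vec d))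
    (C : Vec d → Vec d → Fin N → Fin N → ℝ) (G : Vec d → Fin N → Fin N → ℝ) : Prop :=
  (∀ (k : Fin N) (z : Fin d → ℤ),
      Hop d N R C (col G k) (latticePt d A z) =
        if latticePt d A z = 0 then Pi.single k 1 else 0) ∧
  (∀ j : ℕ, 1 ≤ j → ∃ cj : ℝ, ∀ z : Fin d → ℤ,
      DnormJmat R j G (latticePt d A z) ≤
        cj * ang (latticePt d A z) ^ ((2 : ℝ) - d - j))

/-- A symmetric array `b ∈ (ℝ^{Fin d})^{⊙ i}`. -/
def SymArr {d i : ℕ} (b : (Fin i → Fin d) → ℝ) : Prop :=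
  ∀ (π : Equiv.Perm (Fin i)) (σv : Fin i → Fin d), b (σv ∘ π) = b σv

/-- `b : D_𝒮^i f`, a multipole term built from the basis `s`. -/
def multipole (d N : ℕ) (s : Fin d → Vec d) (i : ℕ) (b : (Fin i → Fin d) → ℝ)
    (f : Vec d → Vec N) : Vec d → Vec N :=
  fun ℓ => ∑ σv : Fin i → Fin d, b σv • Dmulti (fun m => s (σv m)) f ℓ

/-- Iterated partial derivative `∂_{j₁} ⋯ ∂_{j_i} f (x)`. -/
def pderivMulti {d : ℕ} (i : ℕ) (js : Fin i → Fin d) (f : Vec d → ℝ) (x : Vec d) : ℝ :=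
  iteratedFDeriv ℝ i f x (fun m => Pi.single (js m) (1 : ℝ))

/-- `a : ∇^i f (x)` for a tensor `a ∈ (ℝ^d)^{⊗ i}`. -/
def aContract {d : ℕ} (i : ℕ) (a : (Fin i → Fin d) → ℝ) (f : Vec d → ℝ) (x : Vec d) : ℝ :=
  ∑ js : Fin i → Fin d, a js * pderivMulti i js f x

/-- Elementary tensor `σ⃗^⊗` as an array. -/
def tensorPow {d k : ℕ} (σs : Fin k → Vec d) : (Fin k → Fin d) → ℝ :=
  fun js => ∏ m, σs m (js m)

/-- Symmetric tensor product `σ⃗^⊙`. -/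
def symTensor {d k : ℕ} (σs : Fin k → Vec d) : (Fin k → Fin d) → ℝ :=
  fun js => ((k.factorial : ℝ))⁻¹ * ∑ π : Equiv.Perm (Fin k), tensorPow (σs ∘ π) js

/-- A symmetric tensor (array invariant under index permutations). -/
def SymTensor {d k : ℕ} (T : (Fin k → Fin d) → ℝ) : Prop :=
  ∀ (π : Equiv.Perm (Fin k)) (js : Fin k → Fin d), T (js ∘ π) = T js

/-- `∂V/∂g_ρ (gs)` as a vector in `ℝ^N`. -/
def gradV {d N : ℕ} (R : Finset (Vec d)) (V : ({x // x ∈ R} → Vec N) → ℝ)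
    (ρ : {x // x ∈ R}) (gs : {x // x ∈ R} → Vec N) : Vec N :=
  fun i => fderiv ℝ V gs (Pi.single ρ (Pi.single i 1))

/-- The finite-difference stencil `Du(ℓ) = (D_ρ u(ℓ))_{ρ ∈ R}`. -/
def Dstencil {d N : ℕ} (R : Finset (Vec d)) (u : Vec d → Vec N) (ℓ : Vec d) :
    {x // x ∈ R} → Vec N :=
  fun ρ => D1 (ρ : Vec d) u ℓ

/-- `C_{σρ} = ∂²V/∂g_σ ∂g_ρ (0)`. -/
def CofV {d N : ℕ} (R : Finset (Vec d)) (V : ({x // x ∈ R} → Vec N) → ℝ)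
    (σ ρ : Vec d) (i j : Fin N) : ℝ :=
  if hσ : σ ∈ R then
    if hρ : ρ ∈ R then
      iteratedFDeriv ℝ 2 V 0
        ![Pi.single ⟨σ, hσ⟩ (Pi.single i 1), Pi.single ⟨ρ, hρ⟩ (Pi.single j 1)]
    else 0
  else 0

/-- Summand of the first variation `δE(u)[v]` at a site. -/
def deltaEsite {d N : ℕ} (R : Finset (Vec d)) (V : ({x // x ∈ R} → Vec N) → ℝ)
    (u v : Vec d → Vec N) (ℓ : Vec d) : ℝ :=
  ∑ ρ ∈ R.attach, dotV (gradV R V ρ (Dstencil R u ℓ)) (D1 (ρ : Vec d) v ℓ)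

/-- The pointwise atomistic force `δE(u)(ℓ)`. -/
def deltaEpt {d N : ℕ} (R : Finset (Vec d)) (V : ({x // x ∈ R} → Vec N) → ℝ)
    (u : Vec d → Vec N) (ℓ : Vec d) : Vec N :=
  ∑ ρ ∈ R.attach,
    (gradV R V ρ (Dstencil R u (ℓ - (ρ : Vec d))) - gradV R V ρ (Dstencil R u ℓ))

/-- Point symmetry of the site potential. -/
def PointSym {d N : ℕ} (R : Finset (Vec d)) (hRsym : ∀ ρ ∈ R, -ρ ∈ R)
    (V : ({x // x ∈ R} → Vec N) → ℝ) : Prop :=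
  ∀ gs : {x // x ∈ R} → Vec N,
    V (fun ρ => -(gs ⟨-(ρ : Vec d), hRsym _ ρ.2⟩)) = V gs

/-- The Cauchy–Born elasticity tensor `ℂ_{iajb}`. -/
def CB {d N : ℕ} (A : Matrix (Fin d) (Fin d) ℝ) (R : Finset (Vec d))
    (C : Vec d → Vec d → Fin N → Fin N → ℝ)
    (i : Fin N) (a : Fin d) (j : Fin N) (b : Fin d) : ℝ :=
  (|A.det|)⁻¹ * ∑ ρ ∈ R, ∑ σ ∈ R, C ρ σ i j * ρ a * σ b

/-!
In the coordinates of the basis `𝒮` everything takes place on `ℤ^d`. Summation by parts against the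
Green's function represents `D_e u` as the convolution of `D_e 𝒢` with the force `f := H[u]`; the
boundary terms, removed by a smooth cutoff, vanish because `Du → 0` at infinity. Each difference of
the kernel gains one power of decay, so if the moments of `f` of degree `< p` vanish, subtracting
the Taylor polynomial of the kernel improves the decay of the convolution by `p` powers, and the
extra logarithm is `∑_{|m| ≲ |ℓ|} ⟨m⟩^{-d}`.

`H[b : D_𝒮^i 𝒢_k]` is `b : D_𝒮^i δ_0`, and these sources realize every functional on polynomials of
degree `< p`, since Newton polynomials are dual to iterated differences of `δ_0`. Hence `b` can be
chosen so that the force of `w` has vanishing moments. Finally the `l`-th differences of this force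
have `p + |l|` vanishing moments, which turns the bounds for `j ≤ 2` into those for `j ≥ 3`.
-/

/-! ### Finite differences on an abelian group -/

section Differences

variable {Λ : Type*} [AddCommGroup Λ]

/-- The translation operator `f ↦ f(· + e)` on real functions. -/
def shift (e : Λ) : Module.End ℝ (Λ → ℝ) := LinearMap.funLeft ℝ ℝ (· + e)

/-- The forward difference operator `D_e`, as an endomorphism so that differences in several
directions form a commutative algebra. -/
def diff (e : Λ) : Module.End ℝ (Λ → ℝ) := shift e - 1

/-- The iterated difference `D_{e₁} ⋯ D_{e_j}` along a list of directions. -/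
def iterDiff (l : List Λ) : Module.End ℝ (Λ → ℝ) := (l.map diff).prod

@[simp]
theorem shift_apply (e : Λ) (f : Λ → ℝ) (x : Λ) : shift e f x = f (x + e) := rfl

@[simp]
theorem diff_apply (e : Λ) (f : Λ → ℝ) (x : Λ) : diff e f x = f (x + e) - f x := rfl

@[simp]
theorem iterDiff_nil (f : Λ → ℝ) : iterDiff [] f = f := rfl

theorem iterDiff_cons (e : Λ) (l : List Λ) (f : Λ → ℝ) :
    iterDiff (e :: l) f = diff e (iterDiff l f) := by
  simp only [iterDiff, List.map_cons, List.prod_cons, Module.End.mul_apply]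

theorem shift_comm (a e : Λ) (f : Λ → ℝ) : shift a (shift e f) = shift e (shift a f) := by
  funext x
  simp only [shift_apply, add_right_comm]

theorem shift_diff (a e : Λ) (f : Λ → ℝ) : shift a (diff e f) = diff e (shift a f) := by
  simp only [diff, LinearMap.sub_apply, map_sub, Module.End.one_apply, shift_comm]

theorem diff_comm (a e : Λ) (f : Λ → ℝ) : diff a (diff e f) = diff e (diff a f) := by
  rw [diff, LinearMap.sub_apply, LinearMap.sub_apply, shift_diff, map_sub]
  rfl

theorem diff_iterDiff (e : Λ) (l : List Λ) (f : Λ → ℝ) :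
    diff e (iterDiff l f) = iterDiff l (diff e f) := by
  induction l with
  | nil => rfl
  | cons a l ih => rw [iterDiff_cons, iterDiff_cons, diff_comm, ih]

theorem iterDiff_perm {l l' : List Λ} (h : l.Perm l') (f : Λ → ℝ) :
    iterDiff l f = iterDiff l' f := by
  induction h with
  | nil => rfl
  | cons e _ ih => rw [iterDiff_cons, iterDiff_cons, ih]
  | swap a e l => simp only [iterDiff_cons, diff_comm]
  | trans _ _ ih ih' => exact ih.trans ih'

theorem diff_comp_const_sub (e x : Λ) (f : Λ → ℝ) :
    diff e (fun m => f (x - m)) = fun m => diff (-e) f (x - m) := by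
  funext m
  simp only [diff_apply, sub_add_eq_sub_sub, ← sub_eq_add_neg]

theorem iterDiff_comp_const_sub (l : List Λ) (x : Λ) (f : Λ → ℝ) :
    iterDiff l (fun m => f (x - m)) = fun m => iterDiff (l.map Neg.neg) f (x - m) := by
  induction l with
  | nil => rfl
  | cons e l ih => rw [iterDiff_cons, ih, diff_comp_const_sub, List.map_cons, iterDiff_cons]

theorem diff_mul (e : Λ) (f g : Λ → ℝ) :
    diff e (f * g) = diff e f * g + shift e f * diff e g := by
  funext x
  simp only [diff_apply, shift_apply, Pi.add_apply, Pi.mul_apply]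
  ring

/-- A space of functions stable under all translations. -/
def ShiftInvariant (X : Submodule ℝ (Λ → ℝ)) : Prop :=
  ∀ (e : Λ) (f : Λ → ℝ), f ∈ X → shift e f ∈ X

namespace ShiftInvariant

variable {X : Submodule ℝ (Λ → ℝ)} {R : Set Λ}

theorem diff_mem (hX : ShiftInvariant X) (e : Λ) {f : Λ → ℝ} (hf : f ∈ X) : diff e f ∈ X :=
  X.sub_mem (hX e f hf) hf

theorem iterDiff_mem (hX : ShiftInvariant X) (l : List Λ) {f : Λ → ℝ} (hf : f ∈ X) :
    iterDiff l f ∈ X := by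
  induction l with
  | nil => exact hf
  | cons e l ih => rw [iterDiff_cons]; exact hX.diff_mem e ih

theorem diff_mem_of_closure_eq_top (hX : ShiftInvariant X) (hR : AddSubgroup.closure R = ⊤)
    {f : Λ → ℝ} (hf : ∀ ρ ∈ R, diff ρ f ∈ X) (e : Λ) : diff e f ∈ X := by
  have he : e ∈ AddSubgroup.closure R := hR ▸ AddSubgroup.mem_top e
  induction he using AddSubgroup.closure_induction with
  | mem ρ hρ => exact hf ρ hρ
  | zero =>
    have h : diff 0 f = 0 := by
      funext x
      simp
    exact h ▸ X.zero_mem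
  | add a b _ _ ha hb =>
    have h : diff (a + b) f = shift a (diff b f) + diff a f := by
      funext x
      simp [add_assoc]
    exact h ▸ X.add_mem (hX a _ hb) ha
  | neg a _ ha =>
    have h : diff (-a) f = -shift (-a) (diff a f) := by
      funext x
      simp
    exact h ▸ X.neg_mem (hX (-a) _ ha)

theorem iterDiff_mem_of_closure_eq_top (hX : ShiftInvariant X)
    (hR : AddSubgroup.closure R = ⊤) {f : Λ → ℝ} {n : ℕ}
    (hf : ∀ l : List Λ, l.length = n → (∀ e ∈ l, e ∈ R) → iterDiff l f ∈ X)
    {l : List Λ} (hl : l.length = n) : iterDiff l f ∈ X := by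
  induction n generalizing l f with
  | zero => exact hf l hl (by simp [List.length_eq_zero_iff.1 hl])
  | succ n ih =>
    obtain ⟨e, l, rfl⟩ := List.exists_cons_of_length_eq_add_one hl
    rw [iterDiff_cons, diff_iterDiff]
    refine ih (fun l' hl' hl'R => ?_) (by simpa using hl)
    rw [← diff_iterDiff]
    refine hX.diff_mem_of_closure_eq_top hR (fun ρ hρ => ?_) e
    rw [← iterDiff_cons]
    exact hf (ρ :: l') (by simp [hl']) (by simpa using ⟨hρ, hl'R⟩)

end ShiftInvariant

theorem shiftInvariant_zeroAtFilterSubmodule :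
    ShiftInvariant (Filter.zeroAtFilterSubmodule ℝ (cofinite : Filter Λ)) :=
  fun e f (hf : Tendsto f cofinite (𝓝 0)) =>
    hf.comp (add_left_injective e).tendsto_cofinite

end Differences

/-! ### Decay classes -/

section Decay

variable {Λ : Type*} [SeminormedAddCommGroup Λ]

/-- `⟨x⟩ = ‖x‖ + 2`, the counterpart of `ang` on a normed group. -/
def bracket (x : Λ) : ℝ := ‖x‖ + 2

theorem two_le_bracket (x : Λ) : 2 ≤ bracket x := le_add_of_nonneg_left (norm_nonneg x)

theorem bracket_pos (x : Λ) : 0 < bracket x := two_pos.trans_le (two_le_bracket x)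

theorem one_le_bracket (x : Λ) : 1 ≤ bracket x := one_le_two.trans (two_le_bracket x)

theorem norm_le_bracket (x : Λ) : ‖x‖ ≤ bracket x := le_add_of_nonneg_right zero_le_two

theorem bracket_neg (x : Λ) : bracket (-x) = bracket x := by rw [bracket, norm_neg, bracket]

theorem bracket_sub_le (x y : Λ) : bracket (x - y) ≤ bracket x + bracket y := by
  have := norm_sub_le x y
  unfold bracket
  linarith

theorem bracket_le_add_norm (x y : Λ) : bracket x ≤ bracket (x + y) + ‖y‖ := by
  have := norm_sub_le (x + y) y
  rw [add_sub_cancel_right] at this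
  unfold bracket
  linarith

theorem bracket_le_mul_bracket_add (x y : Λ) : bracket x ≤ bracket y * bracket (x + y) := by
  have h := bracket_le_add_norm x y
  have hy : ‖y‖ = bracket y - 2 := by simp [bracket]
  nlinarith [two_le_bracket y, one_le_bracket (x + y)]

theorem half_le_log_two : (1 : ℝ) / 2 ≤ Real.log 2 := by linarith [Real.log_two_gt_d9]

theorem half_le_log {τ : ℝ} (hτ : 2 ≤ τ) : 1 / 2 ≤ Real.log τ :=
  half_le_log_two.trans (Real.log_le_log two_pos hτ)

theorem log_mul_le {c : ℝ} (hc : 1 ≤ c) {τ : ℝ} (hτ : 2 ≤ τ) :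
    Real.log (c * τ) ≤ (2 * Real.log c + 1) * Real.log τ := by
  rw [Real.log_mul (by positivity) (by positivity)]
  nlinarith [half_le_log hτ, Real.log_nonneg hc]

/-- The decay rate `log^α τ / τ^n`. -/
def decayRate (n α : ℕ) (τ : ℝ) : ℝ := Real.log τ ^ α / τ ^ n

theorem decayRate_pos (n α : ℕ) {τ : ℝ} (hτ : 2 ≤ τ) : 0 < decayRate n α τ :=
  div_pos (pow_pos (one_half_pos.trans_le (half_le_log hτ)) α) (pow_pos (two_pos.trans_le hτ) n)

theorem decayRate_nonneg (n α : ℕ) {τ : ℝ} (hτ : 2 ≤ τ) : 0 ≤ decayRate n α τ :=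
  (decayRate_pos n α hτ).le

theorem decayRate_le_of_comparable (n α : ℕ) {K : ℝ} (hK : 1 ≤ K) :
    ∃ C, 0 ≤ C ∧ ∀ σ τ : ℝ, 2 ≤ σ → 2 ≤ τ → σ ≤ K * τ → τ ≤ K * σ →
      decayRate n α σ ≤ C * decayRate n α τ := by
  have hlogK := Real.log_nonneg hK
  refine ⟨(2 * Real.log K + 1) ^ α * K ^ n, by positivity, fun σ τ hσ hτ hστ hτσ => ?_⟩
  have hlog : Real.log σ ≤ (2 * Real.log K + 1) * Real.log τ :=
    (Real.log_le_log (by positivity) hστ).trans (log_mul_le hK hτ)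
  have hlogσ : 0 ≤ Real.log σ := Real.log_nonneg (by linarith)
  have hlogτ : 0 ≤ Real.log τ := Real.log_nonneg (by linarith)
  have hdiv : τ / K ≤ σ := (div_le_iff₀' (by positivity)).2 hτσ
  calc decayRate n α σ
      ≤ ((2 * Real.log K + 1) * Real.log τ) ^ α / (τ / K) ^ n := by
        unfold decayRate
        gcongr
    _ = (2 * Real.log K + 1) ^ α * K ^ n * decayRate n α τ := by
        unfold decayRate
        rw [mul_pow, div_pow]
        field_simp

theorem decayRate_le_add_right (n α β : ℕ) {τ : ℝ} (hτ : 2 ≤ τ) :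
    decayRate n α τ ≤ 2 ^ β * decayRate n (α + β) τ := by
  have h2 : 1 ≤ (2 * Real.log τ) ^ β := one_le_pow₀ (by linarith [half_le_log hτ])
  calc decayRate n α τ ≤ decayRate n α τ * (2 * Real.log τ) ^ β :=
        le_mul_of_one_le_right (decayRate_nonneg n α hτ) h2
    _ = 2 ^ β * decayRate n (α + β) τ := by
        unfold decayRate
        ring

variable (Λ) in
/-- The space of functions that are `O(log^α ⟨x⟩ / ⟨x⟩^n)`, uniformly on the whole group. -/
def decay (n α : ℕ) : Submodule ℝ (Λ → ℝ) where
  carrier := {f | f =O[⊤] fun x => decayRate n α (bracket x)}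
  add_mem' := Asymptotics.IsBigO.add
  zero_mem' := Asymptotics.isBigO_zero _ _
  smul_mem' c _ hf := hf.const_smul_left c

theorem mem_decay {n α : ℕ} {f : Λ → ℝ} {C : ℝ}
    (hf : ∀ x, |f x| ≤ C * decayRate n α (bracket x)) : f ∈ decay Λ n α :=
  Asymptotics.isBigO_top.2
    ⟨C, fun x => (hf x).trans_eq (by
      rw [Real.norm_of_nonneg (decayRate_nonneg n α (two_le_bracket x))])⟩

theorem exists_bound_of_mem_decay {n α : ℕ} {f : Λ → ℝ} (hf : f ∈ decay Λ n α) :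
    ∃ C, 0 ≤ C ∧ ∀ x, |f x| ≤ C * decayRate n α (bracket x) := by
  obtain ⟨C, hC, hfC⟩ := Asymptotics.IsBigO.exists_nonneg hf
  refine ⟨C, hC, fun x => (Asymptotics.isBigOWith_top.1 hfC x).trans_eq ?_⟩
  rw [Real.norm_of_nonneg (decayRate_nonneg n α (two_le_bracket x))]

theorem shiftInvariant_decay (n α : ℕ) : ShiftInvariant (decay Λ n α) := by
  intro e f hf
  obtain ⟨C, hC, hfC⟩ := exists_bound_of_mem_decay hf
  obtain ⟨K, -, hK⟩ := decayRate_le_of_comparable n α (one_le_bracket e)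
  refine mem_decay (C := C * K) fun x => (hfC (x + e)).trans ?_
  rw [mul_assoc]
  refine mul_le_mul_of_nonneg_left (hK _ _ (two_le_bracket _) (two_le_bracket _) ?_ ?_) hC
  · have h := bracket_le_mul_bracket_add (x + e) (-e)
    rwa [add_neg_cancel_right, bracket_neg] at h
  · exact bracket_le_mul_bracket_add x e

theorem decay_anti_left {m n : ℕ} (h : m ≤ n) (α : ℕ) : decay Λ n α ≤ decay Λ m α := by
  intro f hf
  obtain ⟨C, hC, hfC⟩ := exists_bound_of_mem_decay hf
  refine mem_decay (C := C) fun x => (hfC x).trans (mul_le_mul_of_nonneg_left ?_ hC)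
  exact div_le_div_of_nonneg_left (pow_nonneg (Real.log_nonneg (one_le_bracket x)) α)
    (pow_pos (bracket_pos x) m) (pow_le_pow_right₀ (one_le_bracket x) h)

theorem mem_decay_of_finite_support (n α : ℕ) {f : Λ → ℝ} (hf : f.support.Finite) :
    f ∈ decay Λ n α := by
  refine mem_decay (C := ∑ y ∈ hf.toFinset, |f y| / decayRate n α (bracket y)) fun x => ?_
  have hpos := fun y : Λ => decayRate_pos n α (two_le_bracket y)
  rw [← div_le_iff₀ (hpos x)]
  by_cases hx : f x = 0
  · rw [hx, abs_zero, zero_div]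
    exact Finset.sum_nonneg fun y _ => div_nonneg (abs_nonneg _) (hpos y).le
  · exact Finset.single_le_sum (f := fun y => |f y| / decayRate n α (bracket y))
      (fun y _ => div_nonneg (abs_nonneg _) (hpos y).le) (hf.mem_toFinset.2 hx)

theorem comp_neg_mem_decay {n α : ℕ} {f : Λ → ℝ} (hf : f ∈ decay Λ n α) :
    (fun x => f (-x)) ∈ decay Λ n α := by
  obtain ⟨C, -, hfC⟩ := exists_bound_of_mem_decay hf
  exact mem_decay (C := C) fun x => (hfC (-x)).trans_eq (by rw [bracket_neg])

theorem mul_mem_decay {n p α : ℕ} {f q : Λ → ℝ} {B : ℝ} (hf : f ∈ decay Λ (n + p) α)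
    (hq : ∀ x, |q x| ≤ B * bracket x ^ p) : f * q ∈ decay Λ n α := by
  obtain ⟨C, hC, hfC⟩ := exists_bound_of_mem_decay hf
  refine mem_decay (C := C * B) fun x => ?_
  have hrate := decayRate_nonneg (n + p) α (two_le_bracket x)
  have hx := bracket_pos x
  calc |(f * q) x| = |f x| * |q x| := abs_mul _ _
    _ ≤ C * decayRate (n + p) α (bracket x) * (B * bracket x ^ p) :=
        mul_le_mul (hfC x) (hq x) (abs_nonneg _) (by positivity)
    _ = C * B * decayRate n α (bracket x) := by
        unfold decayRate
        rw [pow_add]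
        field_simp

theorem tendsto_decayRate_atTop {n : ℕ} (hn : n ≠ 0) (α : ℕ) :
    Tendsto (decayRate n α) atTop (𝓝 0) := by
  have h := isLittleO_log_rpow_rpow_atTop (s := (n : ℝ)) α (by positivity)
  refine h.tendsto_div_nhds_zero.congr fun τ => ?_
  rw [decayRate, Real.rpow_natCast, Real.rpow_natCast]

theorem tendsto_bracket_cofinite [ProperSpace Λ] [DiscreteTopology Λ] :
    Tendsto (bracket (Λ := Λ)) cofinite atTop := by
  rw [← Filter.cocompact_eq_cofinite]
  exact tendsto_atTop_add_const_right _ _ (tendsto_norm_cocompact_atTop)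

theorem tendsto_zero_of_mem_decay [ProperSpace Λ] [DiscreteTopology Λ] {n α : ℕ}
    (hn : n ≠ 0) {f : Λ → ℝ} (hf : f ∈ decay Λ n α) : Tendsto f cofinite (𝓝 0) :=
  (Asymptotics.IsBigO.mono hf le_top).trans_tendsto
    ((tendsto_decayRate_atTop hn α).comp tendsto_bracket_cofinite)

end Decay

/-! ### Lattice sums -/

section LatticeSums

theorem sum_le_sum_card_fiber_mul {ι : Type*} (F : Finset ι) {f : ι → ℝ} {κ : ι → ℕ} {K : ℕ}
    {n g : ℕ → ℝ} (hg : ∀ k, 0 ≤ g k) (hκ : ∀ m ∈ F, κ m < K) (hf : ∀ m ∈ F, f m ≤ g (κ m))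
    (hn : ∀ k, ((F.filter (κ · = k)).card : ℝ) ≤ n k) :
    ∑ m ∈ F, f m ≤ ∑ k ∈ Finset.range K, n k * g k := by
  rw [← Finset.sum_fiberwise_of_maps_to fun m hm => Finset.mem_range.2 (hκ m hm)]
  refine Finset.sum_le_sum fun k _ => ?_
  calc ∑ m ∈ F with κ m = k, f m ≤ ((F.filter (κ · = k)).card : ℝ) * g k := by
        rw [← nsmul_eq_mul]
        refine Finset.sum_le_card_nsmul _ _ _ fun m hm => ?_
        obtain ⟨hmF, rfl⟩ := Finset.mem_filter.1 hm
        exact hf m hmF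
    _ ≤ n k * g k := mul_le_mul_of_nonneg_right (hn k) (hg k)

variable {d : ℕ}

theorem card_le_of_bracket_le {F : Finset (Fin d → ℤ)} {τ : ℝ} (hτ : 0 ≤ τ)
    (hF : ∀ m ∈ F, bracket m ≤ τ) : (F.card : ℝ) ≤ (3 * τ) ^ d := by
  rcases F.eq_empty_or_nonempty with rfl | ⟨m₀, hm₀⟩
  · simpa using pow_nonneg (by positivity : 0 ≤ 3 * τ) d
  have hsub : F ⊆ Fintype.piFinset fun _ : Fin d => Finset.Icc (-(⌊τ⌋₊ : ℤ)) ⌊τ⌋₊ := by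
    refine fun m hm => Fintype.mem_piFinset.2 fun i => Finset.mem_Icc.2 ?_
    have hi : |(m i : ℝ)| ≤ τ := (norm_le_pi_norm m i).trans ((norm_le_bracket m).trans (hF m hm))
    rw [← Int.cast_abs, ← Nat.cast_natAbs] at hi
    have := Nat.le_floor hi
    omega
  have hcard := Finset.card_le_card hsub
  simp only [Fintype.card_piFinset, Int.card_Icc, Finset.prod_const, Finset.card_univ,
    Fintype.card_fin] at hcard
  have hside : (((⌊τ⌋₊ : ℤ) + 1 - -(⌊τ⌋₊ : ℤ)).toNat : ℝ) ≤ 3 * τ := by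
    have h1 : ((⌊τ⌋₊ : ℤ) + 1 - -(⌊τ⌋₊ : ℤ)).toNat = 2 * ⌊τ⌋₊ + 1 := by omega
    rw [h1]
    push_cast
    linarith [Nat.floor_le hτ, one_le_bracket m₀, hF m₀ hm₀]
  calc (F.card : ℝ) ≤ (((⌊τ⌋₊ : ℤ) + 1 - -(⌊τ⌋₊ : ℤ)).toNat : ℝ) ^ d := mod_cast hcard
    _ ≤ (3 * τ) ^ d := pow_le_pow_left₀ (Nat.cast_nonneg _) hside d

theorem exists_dyadic_scale {a b : ℝ} (ha : 0 < a) (hab : a ≤ b) :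
    ∃ k : ℕ, 2 ^ k * a ≤ b ∧ b ≤ 2 ^ (k + 1) * a := by
  obtain ⟨k, h1, h2⟩ := exists_nat_pow_near ((one_le_div ha).2 hab) one_lt_two
  exact ⟨k, (le_div_iff₀ ha).1 h1, ((div_lt_iff₀ ha).1 h2).le⟩

theorem dyadic_scale_lt {a τ : ℝ} {k : ℕ} (ha : 2 ≤ a) (h : 2 ^ k * a ≤ τ) :
    k < ⌊Real.log τ / Real.log 2⌋₊ + 1 := by
  have hk : (2 : ℝ) ^ k ≤ τ := by nlinarith [pow_pos (two_pos (α := ℝ)) k]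
  have hlog := Real.log_le_log (by positivity) hk
  rw [Real.log_pow] at hlog
  exact Nat.lt_succ_of_le (Nat.le_floor ((le_div_iff₀ (Real.log_pos one_lt_two)).2 hlog))

theorem sum_inv_bracket_pow_le_dyadic {F : Finset (Fin d → ℤ)} {τ : ℝ} {n j : ℕ} (hτ : 2 ≤ τ)
    (hnj : n + j = d) (hF : ∀ m ∈ F, bracket m ≤ τ) :
    ∑ m ∈ F, (bracket m ^ n)⁻¹ ≤
      6 ^ d * τ ^ j * ∑ k ∈ Finset.range (⌊Real.log τ / Real.log 2⌋₊ + 1), ((1 / 2) ^ j) ^ k := by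
  have hτ0 : 0 < τ := by linarith
  choose! κ hκ hκ' using fun m (hm : m ∈ F) => exists_dyadic_scale (bracket_pos m) (hF m hm)
  have h := sum_le_sum_card_fiber_mul F (f := fun m => (bracket m ^ n)⁻¹)
    (n := fun k => (3 * (τ / 2 ^ k)) ^ d) (g := fun k => (2 ^ (k + 1) / τ) ^ n)
    (fun k => by positivity) (fun m hm => dyadic_scale_lt (two_le_bracket m) (hκ m hm)) ?_ ?_
  · refine h.trans ?_
    rw [Finset.mul_sum]
    refine Finset.sum_le_sum fun k _ => ?_
    have h6 : 3 * (τ / 2 ^ k) * (2 ^ (k + 1) / τ) = 6 := by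
      field_simp
      ring
    calc (3 * (τ / 2 ^ k)) ^ d * (2 ^ (k + 1) / τ) ^ n = 6 ^ n * (3 * (τ / 2 ^ k)) ^ j := by
          rw [← hnj, pow_add, mul_right_comm, ← mul_pow, h6]
      _ ≤ 6 ^ n * (6 * (τ / 2 ^ k)) ^ j := by gcongr; norm_num
      _ = 6 ^ d * τ ^ j * ((1 / 2) ^ j) ^ k := by
          rw [← hnj, pow_add, mul_pow, div_pow, one_div, inv_pow, inv_pow, ← pow_mul, ← pow_mul,
            mul_comm j k]
          ring
  · intro m hm
    have := bracket_pos m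
    rw [← inv_pow, inv_eq_one_div]
    gcongr ?_ ^ n
    rw [div_le_div_iff₀ this hτ0, one_mul]
    exact hκ' m hm
  · refine fun k => card_le_of_bracket_le (by positivity) fun m hm => ?_
    obtain ⟨hmF, rfl⟩ := Finset.mem_filter.1 hm
    exact (le_div_iff₀' (by positivity)).2 (hκ m hmF)

variable (d) in
theorem exists_sum_inv_bracket_pow_le_log : ∃ C : ℝ, 0 ≤ C ∧
    ∀ (F : Finset (Fin d → ℤ)) (τ : ℝ), 2 ≤ τ → (∀ m ∈ F, bracket m ≤ τ) →
      ∑ m ∈ F, (bracket m ^ d)⁻¹ ≤ C * Real.log τ := by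
  refine ⟨6 ^ d * (2 / Real.log 2), by positivity, fun F τ hτ hF => ?_⟩
  refine (sum_inv_bracket_pow_le_dyadic hτ (add_zero d) hF).trans ?_
  have hlog2 := Real.log_pos one_lt_two
  have h1 : 1 ≤ Real.log τ / Real.log 2 :=
    (one_le_div hlog2).2 (Real.log_le_log two_pos hτ)
  have h2 := Nat.floor_le (zero_le_one.trans h1)
  simp only [pow_zero, one_pow, Finset.sum_const, Finset.card_range, nsmul_eq_mul, mul_one]
  push_cast
  rw [mul_assoc, div_mul_eq_mul_div, mul_div_assoc]
  gcongr
  linarith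

theorem sum_inv_bracket_pow_le_linear {F : Finset (Fin d → ℤ)} {τ : ℝ} {n : ℕ} (hτ : 2 ≤ τ)
    (hn : n + 1 = d) (hF : ∀ m ∈ F, bracket m ≤ τ) :
    ∑ m ∈ F, (bracket m ^ n)⁻¹ ≤ 6 ^ d * 2 * τ := by
  refine (sum_inv_bracket_pow_le_dyadic hτ hn hF).trans ?_
  rw [pow_one, pow_one, mul_assoc, mul_assoc, mul_comm 2]
  gcongr
  exact sum_geometric_two_le _

theorem decayRate_le_of_dyadic {n α k : ℕ} {a τ : ℝ} (hτ : 2 ≤ τ) (hk : 2 ^ k * τ ≤ a)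
    (hk' : a ≤ 2 ^ (k + 1) * τ) :
    decayRate n α a ≤ ((k + 2) * Real.log τ) ^ α / (2 ^ k * τ) ^ n := by
  have h2k : (1 : ℝ) ≤ 2 ^ k := one_le_pow₀ one_le_two
  have ha : 2 ≤ a := by nlinarith
  have hloga : Real.log a ≤ (k + 2) * Real.log τ := by
    have h := Real.log_le_log (by positivity) hk'
    rw [Real.log_mul (by positivity) (by positivity), Real.log_pow] at h
    push_cast at h
    nlinarith [Real.log_le_log two_pos hτ]
  have hloga0 := Real.log_nonneg (one_le_two.trans ha)
  exact div_le_div₀ (pow_nonneg (hloga0.trans hloga) α) (pow_le_pow_left₀ hloga0 hloga α)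
    (by positivity) (pow_le_pow_left₀ (by positivity) hk n)

theorem summable_pow_mul_half_pow (α : ℕ) :
    Summable fun k : ℕ => ((k : ℝ) + 2) ^ α * (1 / 2) ^ k := by
  have h := (summable_nat_add_iff 2).2
    (summable_pow_mul_geometric_of_norm_lt_one (R := ℝ) α (r := 1 / 2) (by norm_num))
  refine (h.mul_left 4).congr fun k => ?_
  push_cast
  rw [pow_add]
  ring

variable (d) in
theorem exists_sum_decayRate_tail_le (α : ℕ) : ∃ C : ℝ, 0 ≤ C ∧
    ∀ (F : Finset (Fin d → ℤ)) (τ : ℝ), 2 ≤ τ → (∀ m ∈ F, τ ≤ bracket m) →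
      ∑ m ∈ F, decayRate (d + 1) α (bracket m) ≤ C * decayRate 1 α τ := by
  have hnn : ∀ k : ℕ, 0 ≤ ((k : ℝ) + 2) ^ α * (1 / 2) ^ k := fun k => by positivity
  refine ⟨6 ^ d * ∑' k : ℕ, ((k : ℝ) + 2) ^ α * (1 / 2) ^ k,
    mul_nonneg (by positivity) (tsum_nonneg hnn), fun F τ hτ hF => ?_⟩
  have hτ0 : 0 < τ := by linarith
  have hlog : 0 ≤ Real.log τ := Real.log_nonneg (by linarith)
  choose! κ hκ hκ' using fun m (hm : m ∈ F) => exists_dyadic_scale hτ0 (hF m hm)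
  have h := sum_le_sum_card_fiber_mul F (f := fun m => decayRate (d + 1) α (bracket m))
    (n := fun k => (3 * (2 ^ (k + 1) * τ)) ^ d) (K := F.sup κ + 1)
    (g := fun k => ((k + 2) * Real.log τ) ^ α / (2 ^ k * τ) ^ (d + 1))
    (fun k => by positivity) (fun m hm => Nat.lt_succ_of_le (Finset.le_sup hm))
    (fun m hm => decayRate_le_of_dyadic hτ (hκ m hm) (hκ' m hm)) ?_
  · refine h.trans ?_
    have hterm : ∀ k : ℕ, (3 * (2 ^ (k + 1) * τ)) ^ d *
        (((k + 2) * Real.log τ) ^ α / (2 ^ k * τ) ^ (d + 1)) =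
        6 ^ d * decayRate 1 α τ * (((k : ℝ) + 2) ^ α * (1 / 2) ^ k) := by
      intro k
      have h6 : 3 * (2 ^ (k + 1) * τ) = 6 * (2 ^ k * τ) := by ring
      rw [h6, mul_pow 6, mul_pow _ (Real.log τ), decayRate, pow_succ (2 ^ k * τ), one_div, inv_pow]
      field_simp
    simp only [hterm]
    rw [← Finset.mul_sum, mul_right_comm]
    have := decayRate_nonneg 1 α hτ
    gcongr
    exact (summable_pow_mul_half_pow α).sum_le_tsum _ fun k _ => hnn k
  · refine fun k => card_le_of_bracket_le (by positivity) fun m hm => ?_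
    obtain ⟨hmF, rfl⟩ := Finset.mem_filter.1 hm
    exact hκ' m hmF

theorem summable_of_mem_decay {α : ℕ} {f : (Fin d → ℤ) → ℝ}
    (hf : f ∈ decay (Fin d → ℤ) (d + 1) α) : Summable f := by
  obtain ⟨C, -, hfC⟩ := exists_bound_of_mem_decay hf
  obtain ⟨S, -, hS⟩ := exists_sum_decayRate_tail_le d α
  have hrate : Summable fun m : Fin d → ℤ => decayRate (d + 1) α (bracket m) :=
    summable_of_sum_le (fun m => decayRate_nonneg _ α (two_le_bracket m))
      fun F => hS F 2 le_rfl fun m _ => two_le_bracket m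
  exact Summable.of_norm_bounded (hrate.mul_left C) hfC

end LatticeSums

/-! ### Discrete polynomials and Taylor expansion -/

section CoordinatePaths

variable {d : ℕ}

/-- The standard basis vector `e_i` of `ℤ^d`, as a direction for differences. -/
def basisVec (i : Fin d) : Fin d → ℤ := Pi.single i 1

variable (d) in
theorem closure_range_basisVec : AddSubgroup.closure (Set.range (basisVec (d := d))) = ⊤ := by
  refine eq_top_iff.2 fun z _ => ?_
  rw [← Finset.univ_sum_single z]
  refine AddSubgroup.sum_mem _ fun i _ => ?_
  have h : Pi.single i (z i) = z i • basisVec i := by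
    rw [basisVec, ← Pi.single_smul, smul_eq_mul, mul_one]
  exact h ▸ AddSubgroup.zsmul_mem _ (AddSubgroup.subset_closure (Set.mem_range_self i)) _

theorem exists_norm_apply_eq_norm {y : Fin d → ℤ} (hy : 0 < ‖y‖) : ∃ i, ‖y i‖ = ‖y‖ := by
  have : Nonempty (Fin d) := not_isEmpty_iff.1 fun _ => hy.ne' (by simp [Subsingleton.elim y 0])
  obtain ⟨i, hi⟩ := Finite.exists_max fun i => ‖y i‖
  exact ⟨i, (norm_le_pi_norm y i).antisymm ((pi_norm_le_iff_of_nonneg (norm_nonneg _)).2 hi)⟩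

theorem sum_natAbs_add_one {y z : Fin d → ℤ} {i : Fin d} (h : ∀ j ≠ i, z j = y j)
    (hi : (z i).natAbs + 1 = (y i).natAbs) :
    ∑ j, (z j).natAbs + 1 = ∑ j, (y j).natAbs := by
  rw [← Finset.add_sum_erase _ _ (Finset.mem_univ i), ← Finset.add_sum_erase _ _
    (Finset.mem_univ i), ← hi, Finset.sum_congr rfl fun j hj => ?_]
  · ring
  · rw [h j (Finset.ne_of_mem_erase hj)]

theorem exists_shorter_neighbor {y : Fin d → ℤ} {k : ℕ} (hy : k < ‖y‖) :
    ∃ i z, (y = z + basisVec i ∨ z = y + basisVec i) ∧ k ≤ ‖z‖ ∧ ‖z‖ ≤ ‖y‖ ∧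
      ∑ j, (z j).natAbs + 1 = ∑ j, (y j).natAbs := by
  obtain ⟨i, hi⟩ := exists_norm_apply_eq_norm ((Nat.cast_nonneg k).trans_lt hy)
  have hki : k < (y i).natAbs := by
    rw [← hi, Int.norm_eq_abs, ← Int.cast_abs, ← Nat.cast_natAbs] at hy
    exact_mod_cast hy
  obtain ⟨z, hz, hne, hzi⟩ : ∃ z, (y = z + basisVec i ∨ z = y + basisVec i) ∧
      (∀ j ≠ i, z j = y j) ∧ (z i).natAbs + 1 = (y i).natAbs := by
    rcases le_total 0 (y i) with h | h
    · refine ⟨y - basisVec i, Or.inl (sub_add_cancel _ _).symm, fun j hj => ?_, ?_⟩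
      · simp [basisVec, hj]
      · simp only [basisVec, Pi.sub_apply, Pi.single_eq_same]
        omega
    · refine ⟨y + basisVec i, Or.inr rfl, fun j hj => ?_, ?_⟩
      · simp [basisVec, hj]
      · simp only [basisVec, Pi.add_apply, Pi.single_eq_same]
        omega
  refine ⟨i, z, hz, ?_, ?_, sum_natAbs_add_one hne hzi⟩
  · refine le_trans ?_ (norm_le_pi_norm z i)
    rw [Int.norm_eq_abs, ← Int.cast_abs, ← Nat.cast_natAbs]
    exact_mod_cast (by omega : k ≤ (z i).natAbs)
  · refine (pi_norm_le_iff_of_nonneg (norm_nonneg y)).2 fun j => ?_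
    by_cases hj : j = i
    · rw [hj, ← hi]
      simp only [Int.norm_eq_abs, ← Int.cast_abs, ← Nat.cast_natAbs]
      exact_mod_cast (by omega : (z i).natAbs ≤ (y i).natAbs)
    · rw [hne j hj]
      exact norm_le_pi_norm y j

/-- A path from a ball to `y` along coordinate directions that always shortens a longest
coordinate stays in the spherical shell between the ball and `y`. -/
theorem abs_le_of_abs_diff_basisVec_le {V : (Fin d → ℤ) → ℝ} {k : ℕ} {ε B r : ℝ}
    (hε : 0 ≤ ε) (hdiff : ∀ z i, k ≤ ‖z‖ → ‖z‖ ≤ r → |diff (basisVec i) V z| ≤ ε)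
    (hball : ∀ z, ‖z‖ ≤ k → |V z| ≤ B) {y : Fin d → ℤ} (hy : ‖y‖ ≤ r) :
    |V y| ≤ ε * ∑ i, ((y i).natAbs : ℝ) + B := by
  induction hn : ∑ i, (y i).natAbs using Nat.strong_induction_on generalizing y with
  | _ n ih =>
  rw [← Nat.cast_sum, hn]
  rcases le_or_gt ‖y‖ k with hyk | hyk
  · exact (hball y hyk).trans (le_add_of_nonneg_left (by positivity))
  · obtain ⟨i, z, hyz, hkz, hzy, hsum⟩ := exists_shorter_neighbor hyk
    have hstep : |V y| ≤ |V z| + ε := by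
      rcases hyz with rfl | rfl
      · have h := hdiff z i hkz (hzy.trans hy)
        rw [diff_apply] at h
        linarith [abs_sub_abs_le_abs_sub (V (z + basisVec i)) (V z)]
      · have h := hdiff y i hyk.le hy
        rw [diff_apply, abs_sub_comm] at h
        linarith [abs_sub_abs_le_abs_sub (V y) (V (y + basisVec i))]
    have hz := ih _ (by omega) (hzy.trans hy) rfl
    rw [← Nat.cast_sum] at hz
    have hn' : (n : ℝ) = ((∑ j, (z j).natAbs : ℕ) : ℝ) + 1 := by
      exact_mod_cast hn.symm.trans hsum.symm
    rw [hn']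
    linarith

end CoordinatePaths

section DiscretePolynomials

variable {Λ : Type*} [AddCommGroup Λ]

variable (Λ) in
/-- The space of discrete polynomials of degree `< p`: the functions annihilated by all iterated
differences of order `p`. -/
def discretePoly : ℕ → Submodule ℝ (Λ → ℝ)
  | 0 => ⊥
  | p + 1 => ⨅ e : Λ, (discretePoly p).comap (diff e)

theorem mem_discretePoly_succ {p : ℕ} {q : Λ → ℝ} :
    q ∈ discretePoly Λ (p + 1) ↔ ∀ e, diff e q ∈ discretePoly Λ p := by
  simp only [discretePoly, Submodule.mem_iInf, Submodule.mem_comap]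

theorem mem_discretePoly_zero {q : Λ → ℝ} : q ∈ discretePoly Λ 0 ↔ q = 0 := Submodule.mem_bot ℝ

theorem discretePoly_mono : Monotone (discretePoly Λ) := by
  refine monotone_nat_of_le_succ fun p => ?_
  induction p with
  | zero => exact bot_le
  | succ p ih =>
    exact fun q hq => mem_discretePoly_succ.2 fun e => ih (mem_discretePoly_succ.1 hq e)

theorem shiftInvariant_discretePoly (p : ℕ) : ShiftInvariant (discretePoly Λ p) := by
  induction p with
  | zero =>
    intro e q hq
    rw [mem_discretePoly_zero.1 hq, map_zero]
    exact Submodule.zero_mem _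
  | succ p ih =>
    refine fun e q hq => mem_discretePoly_succ.2 fun a => ?_
    rw [← shift_diff]
    exact ih e _ (mem_discretePoly_succ.1 hq a)

theorem iterDiff_mem_discretePoly {p : ℕ} (l : List Λ) {q : Λ → ℝ}
    (hq : q ∈ discretePoly Λ (p + l.length)) : iterDiff l q ∈ discretePoly Λ p := by
  induction l generalizing p with
  | nil => exact hq
  | cons e l ih =>
    rw [iterDiff_cons]
    refine mem_discretePoly_succ.1 (ih ?_) e
    rwa [List.length_cons, ← add_assoc, add_right_comm] at hq

theorem comp_neg_mem_discretePoly {p : ℕ} {q : Λ → ℝ} (hq : q ∈ discretePoly Λ p) :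
    (fun x => q (-x)) ∈ discretePoly Λ p := by
  induction p generalizing q with
  | zero => exact mem_discretePoly_zero.2 (funext fun x => by simp [mem_discretePoly_zero.1 hq])
  | succ p ih =>
    refine mem_discretePoly_succ.2 fun e => ?_
    have h : diff e (fun x => q (-x)) = fun x => diff (-e) q (-x) := by
      simpa only [zero_sub] using diff_comp_const_sub e 0 q
    rw [h]
    exact ih (mem_discretePoly_succ.1 hq (-e))

end DiscretePolynomials

section Jets

variable {d : ℕ}

theorem sum_natAbs_le (y : Fin d → ℤ) : ∑ i, ((y i).natAbs : ℝ) ≤ d * ‖y‖ := by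
  refine (Finset.sum_le_card_nsmul _ _ ‖y‖ fun i _ => ?_).trans_eq (by simp)
  rw [Nat.cast_natAbs, Int.cast_abs, ← Int.norm_eq_abs]
  exact norm_le_pi_norm y i

theorem abs_le_mul_norm_add_abs_zero {V : (Fin d → ℤ) → ℝ} {ε r : ℝ} (hε : 0 ≤ ε)
    (hdiff : ∀ z i, ‖z‖ ≤ r → |diff (basisVec i) V z| ≤ ε) {y : Fin d → ℤ} (hy : ‖y‖ ≤ r) :
    |V y| ≤ ε * (d * ‖y‖) + |V 0| := by
  have hball : ∀ z : Fin d → ℤ, ‖z‖ ≤ (0 : ℕ) → |V z| ≤ |V 0| := by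
    intro z hz
    have hz0 : z = 0 := norm_le_zero_iff.1 (by simpa using hz)
    rw [hz0]
  refine (abs_le_of_abs_diff_basisVec_le hε (fun z i _ => hdiff z i) hball hy).trans ?_
  gcongr
  exact sum_natAbs_le y

theorem abs_le_of_jet_le {p : ℕ} {f : (Fin d → ℤ) → ℝ} {B : ℕ → ℝ} {M r : ℝ}
    (hB0 : ∀ k, 0 ≤ B k) (hM0 : 0 ≤ M)
    (hB : ∀ l : List (Fin d), l.length < p → |iterDiff (l.map basisVec) f 0| ≤ B l.length)
    (hM : ∀ l : List (Fin d), l.length = p → ∀ z, ‖z‖ ≤ r →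
      |iterDiff (l.map basisVec) f z| ≤ M) {y : Fin d → ℤ} (hy : ‖y‖ ≤ r) :
    |f y| ≤ ∑ k ∈ Finset.range p, (d * r) ^ k * B k + (d * r) ^ p * M := by
  have hr : 0 ≤ r := (norm_nonneg y).trans hy
  induction p generalizing f y B with
  | zero => simpa using hM [] rfl y hy
  | succ p ih =>
    set ε := ∑ k ∈ Finset.range p, (d * r) ^ k * B (k + 1) + (d * r) ^ p * M
    have hε : 0 ≤ ε := add_nonneg
      (Finset.sum_nonneg fun k _ => mul_nonneg (by positivity) (hB0 (k + 1))) (by positivity)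
    have hdiff : ∀ z i, ‖z‖ ≤ r → |diff (basisVec i) f z| ≤ ε := by
      intro z i hz
      refine ih (B := fun k => B (k + 1)) (fun k => hB0 (k + 1)) (fun l hl => ?_)
        (fun l hl => ?_) hz
      · rw [← diff_iterDiff, ← iterDiff_cons]
        exact hB (i :: l) (by simpa using hl)
      · rw [← diff_iterDiff, ← iterDiff_cons]
        exact hM (i :: l) (by simpa using hl)
    calc |f y| ≤ ε * (d * ‖y‖) + |f 0| := abs_le_mul_norm_add_abs_zero hε hdiff hy
      _ ≤ ε * (d * r) + B 0 := by
        gcongr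
        exact hB [] p.succ_pos
      _ = _ := by
        rw [Finset.sum_range_succ', add_mul, Finset.sum_mul]
        simp only [pow_succ, pow_zero, one_mul]
        simp only [mul_right_comm, add_right_comm]

theorem eq_zero_of_jet_eq_zero {p : ℕ} {q : (Fin d → ℤ) → ℝ}
    (hq : q ∈ discretePoly (Fin d → ℤ) p)
    (h : ∀ l : List (Fin d), l.length < p → iterDiff (l.map basisVec) q 0 = 0) : q = 0 := by
  funext y
  have hM : ∀ l : List (Fin d), l.length = p → iterDiff (l.map basisVec) q = 0 := fun l hl =>
    mem_discretePoly_zero.1 (iterDiff_mem_discretePoly _ (by simpa [hl] using hq))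
  have := abs_le_of_jet_le (p := p) (f := q) (B := 0) (fun _ => le_rfl) le_rfl
    fun l hl => by simp [h l hl]
    (fun l hl z _ => (by simp [hM l hl])) (le_refl ‖y‖)
  simpa using this

theorem exists_growth_bound_of_mem_discretePoly {p : ℕ} {q : (Fin d → ℤ) → ℝ}
    (hq : q ∈ discretePoly (Fin d → ℤ) (p + 1)) : ∃ B, ∀ x, |q x| ≤ B * bracket x ^ p := by
  induction p generalizing q with
  | zero =>
    refine ⟨|q 0|, fun x => ?_⟩
    have h := congrFun (mem_discretePoly_zero.1 (mem_discretePoly_succ.1 hq x)) 0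
    rw [diff_apply, zero_add, Pi.zero_apply, sub_eq_zero] at h
    rw [h, pow_zero, mul_one]
  | succ p ih =>
    choose B hB using fun i : Fin d => ih (mem_discretePoly_succ.1 hq (basisVec i))
    refine ⟨(∑ i, |B i|) * d + |q 0|, fun x => ?_⟩
    have hx := one_le_bracket x
    have hdiff : ∀ z i, ‖z‖ ≤ ‖x‖ →
        |diff (basisVec i) q z| ≤ (∑ i, |B i|) * bracket x ^ p := by
      intro z i hz
      have hBi : B i ≤ ∑ i, |B i| := (le_abs_self _).trans
        (Finset.single_le_sum (f := fun i => |B i|) (fun j _ => abs_nonneg _) (Finset.mem_univ i))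
      have hzx : bracket z ≤ bracket x := by simpa only [bracket, add_le_add_iff_right] using hz
      have hz0 := bracket_pos z
      exact (hB i z).trans (by gcongr)
    calc |q x| ≤ (∑ i, |B i|) * bracket x ^ p * (d * ‖x‖) + |q 0| :=
          abs_le_mul_norm_add_abs_zero (by positivity) hdiff le_rfl
      _ ≤ (∑ i, |B i|) * bracket x ^ p * (d * bracket x) + |q 0| * bracket x ^ (p + 1) := by
        gcongr
        · exact norm_le_bracket x
        · exact le_mul_of_one_le_right (abs_nonneg _) (one_le_pow₀ hx)
      _ = _ := by ring

end Jets

section NewtonPolynomials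

variable {d : ℕ}

/-- The Newton basis polynomial `∏ i, (x_i choose s_i)`, where `s_i` is the multiplicity of `i` in
the multiset `s`; these are dual to the iterated basis differences at the origin. -/
def newtonPoly (s : Multiset (Fin d)) (x : Fin d → ℤ) : ℝ :=
  (∏ i, Ring.choose (x i) (s.count i) : ℤ)

theorem diff_basisVec_newtonPoly (i : Fin d) (s : Multiset (Fin d)) :
    diff (basisVec i) (newtonPoly s) = if i ∈ s then newtonPoly (s.erase i) else 0 := by
  funext x
  have hx : ∏ j ∈ Finset.univ.erase i, Ring.choose ((x + basisVec i) j) (s.count j) =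
      ∏ j ∈ Finset.univ.erase i, Ring.choose (x j) (s.count j) :=
    Finset.prod_congr rfl fun j hj => by simp [basisVec, Finset.ne_of_mem_erase hj]
  have hxi : (x + basisVec i) i = x i + 1 := by simp [basisVec]
  rw [diff_apply, newtonPoly, newtonPoly, ← Finset.mul_prod_erase _ _ (Finset.mem_univ i),
    ← Finset.mul_prod_erase _ (fun j => Ring.choose (x j) _) (Finset.mem_univ i), hx, hxi]
  split_ifs with hi
  · obtain ⟨k, hk⟩ := Nat.exists_eq_add_one_of_ne_zero (Multiset.count_ne_zero.2 hi)
    have hs : ∏ j ∈ Finset.univ.erase i, Ring.choose (x j) ((s.erase i).count j) =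
        ∏ j ∈ Finset.univ.erase i, Ring.choose (x j) (s.count j) :=
      Finset.prod_congr rfl fun j hj => by
        rw [Multiset.count_erase_of_ne (Finset.ne_of_mem_erase hj)]
    rw [newtonPoly, ← Finset.mul_prod_erase _ _ (Finset.mem_univ i), hs,
      Multiset.count_erase_self, hk, Ring.choose_succ_succ, Nat.add_sub_cancel]
    push_cast
    ring
  · simp [Multiset.count_eq_zero.2 hi]

theorem newtonPoly_zero (s : Multiset (Fin d)) : newtonPoly s 0 = if s = 0 then 1 else 0 := by
  split_ifs with h
  · simp [newtonPoly, h]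
  · obtain ⟨i, hi⟩ := Multiset.exists_mem_of_ne_zero h
    rw [newtonPoly, Finset.prod_eq_zero (Finset.mem_univ i), Int.cast_zero]
    exact Ring.choose_zero_pos ℤ (Multiset.count_pos.2 hi)

theorem newtonPoly_mem_discretePoly (s : Multiset (Fin d)) :
    newtonPoly s ∈ discretePoly (Fin d → ℤ) (s.card + 1) := by
  induction hn : s.card generalizing s with
  | zero =>
    refine mem_discretePoly_succ.2 ((shiftInvariant_discretePoly 0).diff_mem_of_closure_eq_top
      (closure_range_basisVec d) ?_)
    rintro _ ⟨i, rfl⟩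
    rw [diff_basisVec_newtonPoly, Multiset.card_eq_zero.1 hn, if_neg (Multiset.notMem_zero i)]
    exact Submodule.zero_mem _
  | succ n ih =>
    refine mem_discretePoly_succ.2 ((shiftInvariant_discretePoly _).diff_mem_of_closure_eq_top
      (closure_range_basisVec d) ?_)
    rintro _ ⟨i, rfl⟩
    rw [diff_basisVec_newtonPoly]
    split_ifs with hi
    · exact ih _ (by rw [Multiset.card_erase_of_mem hi, hn, Nat.pred_succ])
    · exact Submodule.zero_mem _

theorem iterDiff_newtonPoly_zero (l : List (Fin d)) (s : Multiset (Fin d)) :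
    iterDiff (l.map basisVec) (newtonPoly s) 0 = if (l : Multiset (Fin d)) = s then 1 else 0 := by
  induction l generalizing s with
  | nil => simp [newtonPoly_zero, eq_comm]
  | cons i l ih =>
    rw [List.map_cons, iterDiff_cons, diff_iterDiff, diff_basisVec_newtonPoly]
    by_cases hi : i ∈ s
    · obtain ⟨t, rfl⟩ := Multiset.exists_cons_of_mem hi
      rw [if_pos hi, ih, Multiset.erase_cons_head, ← Multiset.cons_coe]
      simp only [Multiset.cons_inj_right]
    · have hne : ((i :: l : List (Fin d)) : Multiset (Fin d)) ≠ s := by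
        rintro rfl
        exact hi (by simp)
      rw [if_neg hi, map_zero, if_neg hne, Pi.zero_apply]

/-- The Newton interpolation polynomial of degree `< p` of `f` at the origin. -/
def taylorPoly (p : ℕ) (f : (Fin d → ℤ) → ℝ) : (Fin d → ℤ) → ℝ :=
  ∑ k ∈ Finset.range p, ∑ s : Sym (Fin d) k,
    iterDiff ((s : Multiset (Fin d)).toList.map basisVec) f 0 • newtonPoly (s : Multiset (Fin d))

theorem taylorPoly_mem_discretePoly (p : ℕ) (f : (Fin d → ℤ) → ℝ) :
    taylorPoly p f ∈ discretePoly (Fin d → ℤ) p := by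
  refine Submodule.sum_mem _ fun k hk => Submodule.sum_mem _ fun s _ => Submodule.smul_mem _ _ ?_
  refine discretePoly_mono ?_ (newtonPoly_mem_discretePoly _)
  simpa using hk

theorem jet_taylorPoly {p : ℕ} (f : (Fin d → ℤ) → ℝ) {l : List (Fin d)} (hl : l.length < p) :
    iterDiff (l.map basisVec) (taylorPoly p f) 0 = iterDiff (l.map basisVec) f 0 := by
  simp only [taylorPoly, map_sum, map_smul, Finset.sum_apply, Pi.smul_apply,
    iterDiff_newtonPoly_zero, smul_eq_mul]
  rw [Finset.sum_eq_single_of_mem l.length (Finset.mem_range.2 hl) fun k _ hk =>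
      Finset.sum_eq_zero fun s _ => ?_,
    Finset.sum_eq_single_of_mem (Sym.mk (l : Multiset (Fin d)) (Multiset.coe_card l))
      (Finset.mem_univ _) fun s _ hs => ?_]
  · have hperm : ((l : Multiset (Fin d)).toList).Perm l := by
      rw [← Multiset.coe_eq_coe, Multiset.coe_toList]
    rw [Sym.coe_mk, if_pos rfl, mul_one, iterDiff_perm (hperm.map _)]
  · rw [if_neg fun h => hs (Sym.ext h.symm), mul_zero]
  · rw [if_neg, mul_zero]
    rintro h
    exact hk (by simpa using (congrArg Multiset.card h).symm)

end NewtonPolynomials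

section Telescoping

theorem tsum_int_sub_eq_zero {G : ℤ → ℝ} (hG : Tendsto G cofinite (𝓝 0))
    (hs : Summable fun n => G (n + 1) - G n) : ∑' n, (G (n + 1) - G n) = 0 := by
  have hpos : Tendsto (fun n : ℕ => G n) atTop (𝓝 0) := by
    rw [← Nat.cofinite_eq_atTop]
    exact hG.comp Nat.cast_injective.tendsto_cofinite
  have hneg : Tendsto (fun n : ℕ => G (-n)) atTop (𝓝 0) := by
    rw [← Nat.cofinite_eq_atTop]
    exact hG.comp (neg_injective.comp Nat.cast_injective).tendsto_cofinite
  have hs₁ : Summable fun n : ℕ => G (n + 1) - G n :=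
    hs.comp_injective (i := fun n : ℕ => (n : ℤ)) Nat.cast_injective
  have hs₂ : Summable fun n : ℕ => G (-(n + 1) + 1) - G (-(n + 1)) :=
    hs.comp_injective (i := fun n : ℕ => -((n : ℤ) + 1)) fun m n h => by simpa using h
  have h₁ := tendsto_nhds_unique hs₁.hasSum.tendsto_sum_nat
    ((hpos.sub_const (G 0)).congr fun n => (Finset.sum_range_sub (fun n : ℕ => G n) n).symm)
  have h₂ := tendsto_nhds_unique hs₂.hasSum.tendsto_sum_nat
    ((hneg.const_sub (G 0)).congr fun n => by
      simpa using (Finset.sum_range_sub' (fun n : ℕ => G (-n)) n).symm)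
  have h := HasSum.of_nat_of_neg_add_one (f := fun n => G (n + 1) - G n) hs₁.hasSum hs₂.hasSum
  rw [h.tsum_eq, h₁, h₂, zero_sub, sub_zero, neg_add_cancel]

variable {Λ : Type*} [AddCommGroup Λ]

theorem bijective_out_add_zsmul [IsAddTorsionFree Λ] {a : Λ} (ha : a ≠ 0) :
    Function.Bijective fun x : (Λ ⧸ AddSubgroup.zmultiples a) × ℤ => x.1.out + x.2 • a := by
  refine ⟨fun x y h => ?_, fun z => ?_⟩
  · have hmk : x.1 = y.1 := by
      have := congrArg (QuotientAddGroup.mk (s := AddSubgroup.zmultiples a)) h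
      simpa using this
    have hsmul : x.2 • a = y.2 • a := by simpa [hmk] using h
    refine Prod.ext hmk (sub_eq_zero.1 ?_)
    rwa [← IsAddTorsionFree.zsmul_eq_zero_iff_left ha, sub_smul, sub_eq_zero]
  · obtain ⟨⟨_, n, rfl⟩, hn⟩ := QuotientAddGroup.mk_out_eq_add (AddSubgroup.zmultiples a) z
    exact ⟨(QuotientAddGroup.mk z, -n), by simp [hn]⟩

/- Sum first along the cosets of `ℤ a`, where the series telescopes. -/
theorem tsum_diff_eq_zero [IsAddTorsionFree Λ] {E : Λ → ℝ} (hE : Tendsto E cofinite (𝓝 0))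
    (a : Λ) (hs : Summable (diff a E)) : ∑' x, diff a E x = 0 := by
  rcases eq_or_ne a 0 with rfl | ha
  · simp
  let φ := Equiv.ofBijective _ (bijective_out_add_zsmul ha)
  have hφ : ∀ q n, diff a E (φ (q, n)) = E (φ (q, n + 1)) - E (φ (q, n)) := by
    intro q n
    simp [φ, add_smul, add_assoc]
  have hsφ : Summable fun x => diff a E (φ x) := φ.summable_iff.2 hs
  rw [← φ.tsum_eq, hsφ.tsum_prod, ← tsum_zero]
  refine tsum_congr fun q => ?_
  simp only [hφ]
  refine tsum_int_sub_eq_zero (G := fun n => E (φ (q, n))) ?_ ?_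
  · exact hE.comp (φ.injective.comp (Prod.mk_right_injective q)).tendsto_cofinite
  · simpa only [hφ] using hsφ.prod_factor q

end Telescoping

section Moments

/-- All moments of `f` against discrete polynomials of degree `< p` exist and vanish. -/
def HasVanishingMoments {Λ : Type*} [AddCommGroup Λ] (p : ℕ) (f : Λ → ℝ) : Prop :=
  ∀ q ∈ discretePoly Λ p, HasSum (f * q) 0

variable {d p α : ℕ} {f : (Fin d → ℤ) → ℝ}

theorem summable_mul_of_mem_discretePoly {q : (Fin d → ℤ) → ℝ}
    (hf : f ∈ decay (Fin d → ℤ) (d + p) α) (hq : q ∈ discretePoly (Fin d → ℤ) p) :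
    Summable (f * q) := by
  cases p with
  | zero =>
    rw [mem_discretePoly_zero.1 hq, mul_zero]
    exact summable_zero
  | succ p =>
    obtain ⟨B, hB⟩ := exists_growth_bound_of_mem_discretePoly hq
    exact summable_of_mem_decay (mul_mem_decay (by rwa [add_right_comm, add_assoc]) hB)

theorem hasVanishingMoments_diff (hd : d ≠ 0) (hf : f ∈ decay (Fin d → ℤ) (d + p) α) {a : Fin d → ℤ}
    (hdf : diff a f ∈ decay (Fin d → ℤ) (d + (p + 1)) α) (h : HasVanishingMoments p f) :
    HasVanishingMoments (p + 1) (diff a f) := by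
  intro q hq
  obtain ⟨B, hB⟩ := exists_growth_bound_of_mem_discretePoly hq
  have hshift : HasSum (shift a f * diff a q) 0 := by
    have hmem := shiftInvariant_discretePoly p (-a) _ (mem_discretePoly_succ.1 hq a)
    convert (Equiv.addRight a).hasSum_iff.2 (h _ hmem) using 1
    funext x
    simp
  have hs := summable_mul_of_mem_discretePoly hdf hq
  have htele := tsum_diff_eq_zero (tendsto_zero_of_mem_decay hd (mul_mem_decay hf hB)) a
    (by rw [diff_mul]; exact hs.add hshift.summable)
  have hq0 : ∑' x : Fin d → ℤ, (diff a f * q) x = 0 := by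
    rw [diff_mul] at htele
    exact (add_zero _).symm.trans ((hs.hasSum.add hshift).tsum_eq.symm.trans htele)
  exact hq0 ▸ hs.hasSum

theorem hasVanishingMoments_iterDiff (hd : d ≠ 0) (h : HasVanishingMoments p f)
    {l : List (Fin d → ℤ)} (hf : ∀ l' : List (Fin d → ℤ), l'.length ≤ l.length →
      iterDiff l' f ∈ decay (Fin d → ℤ) (d + (p + l'.length)) α) :
    HasVanishingMoments (p + l.length) (iterDiff l f) := by
  induction l with
  | nil => exact h
  | cons a l ih =>
    have hl := hf l (Nat.le_succ _)
    have hal := hf (a :: l) le_rfl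
    rw [iterDiff_cons] at hal ⊢
    exact hasVanishingMoments_diff hd hl hal (ih fun l' hl' => hf l' (hl'.trans (Nat.le_succ _)))

end Moments

section SummationByParts

variable {Λ : Type*}

theorem summable_mul_of_finite_support {f : Λ → ℝ} (hf : f.support.Finite) (g : Λ → ℝ) :
    Summable (f * g) :=
  summable_of_hasFiniteSupport (hf.subset (Function.support_mul_subset_left f g))

variable [AddCommGroup Λ]

theorem finite_support_shift (e : Λ) {f : Λ → ℝ} (hf : f.support.Finite) :
    (shift e f).support.Finite :=
  hf.preimage (add_left_injective e).injOn

theorem finite_support_diff (e : Λ) {f : Λ → ℝ} (hf : f.support.Finite) :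
    (diff e f).support.Finite :=
  ((finite_support_shift e hf).union hf).subset (Function.support_sub _ _)

theorem finite_support_iterDiff (l : List Λ) {f : Λ → ℝ} (hf : f.support.Finite) :
    (iterDiff l f).support.Finite := by
  induction l with
  | nil => exact hf
  | cons e l ih => exact iterDiff_cons e l f ▸ finite_support_diff e ih

theorem tsum_diff_mul (e : Λ) {f : Λ → ℝ} (hf : f.support.Finite) (g : Λ → ℝ) :
    ∑' x, (diff e f * g) x = ∑' x, (f * diff (-e) g) x := by
  have h₁ : diff e f * g = shift e f * g - f * g := sub_mul _ _ _
  have h₂ : f * diff (-e) g = f * shift (-e) g - f * g := mul_sub _ _ _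
  have hshift : ∑' x, (shift e f * g) x = ∑' x, (f * shift (-e) g) x := by
    rw [← (Equiv.addRight e).tsum_eq (f * shift (-e) g)]
    simp
  rw [h₁, h₂]
  simp only [Pi.sub_apply]
  rw [(summable_mul_of_finite_support (finite_support_shift e hf) g).tsum_sub
    (summable_mul_of_finite_support hf g), (summable_mul_of_finite_support hf _).tsum_sub
    (summable_mul_of_finite_support hf g), hshift]

theorem tsum_iterDiff_mul (l : List Λ) {f : Λ → ℝ} (hf : f.support.Finite) (g : Λ → ℝ) :
    ∑' x, (iterDiff l f * g) x = ∑' x, (f * iterDiff (l.map Neg.neg) g) x := by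
  induction l generalizing g with
  | nil => rfl
  | cons e l ih =>
    rw [iterDiff_cons, tsum_diff_mul e (finite_support_iterDiff l hf), ih, List.map_cons,
      iterDiff_cons, diff_iterDiff]

end SummationByParts

section MultipoleCoefficients

theorem exists_symmetric_coeffs {ι E : Type*} [Fintype ι] [AddCommGroup E] [Module ℝ E] {n : ℕ}
    {T : (Fin n → ι) → E} (hT : ∀ (π : Equiv.Perm (Fin n)) σ, T (σ ∘ π) = T σ)
    (c : (Fin n → ι) → ℝ) :
    ∃ b : (Fin n → ι) → ℝ, (∀ (π : Equiv.Perm (Fin n)) σ, b (σ ∘ π) = b σ) ∧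
      ∑ σ, b σ • T σ = ∑ σ, c σ • T σ := by
  refine ⟨fun σ => ((Nat.factorial n : ℝ))⁻¹ * ∑ τ : Equiv.Perm (Fin n), c (σ ∘ τ),
    fun π σ => ?_, ?_⟩
  · refine congrArg _ ?_
    exact Equiv.sum_comp (Equiv.mulLeft π) fun τ : Equiv.Perm (Fin n) => c (σ ∘ τ)
  · have hτ : ∀ τ : Equiv.Perm (Fin n), ∑ σ, c (σ ∘ τ) • T σ = ∑ σ, c σ • T σ := by
      intro τ
      rw [← (Equiv.arrowCongr τ (Equiv.refl ι)).sum_comp]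
      refine Finset.sum_congr rfl fun σ _ => ?_
      have hσ : Equiv.arrowCongr τ (Equiv.refl ι) σ = σ ∘ τ.symm := rfl
      rw [hσ, hT, Function.comp_assoc, Equiv.symm_comp_self, Function.comp_id]
    simp only [mul_smul, Finset.sum_smul]
    rw [← Finset.smul_sum, Finset.sum_comm, Finset.sum_congr rfl fun τ _ => hτ τ, Finset.sum_const,
      Finset.card_univ, Fintype.card_perm, Fintype.card_fin, ← Nat.cast_smul_eq_nsmul ℝ, smul_smul,
      inv_mul_cancel₀ (by positivity), one_smul]

variable {d : ℕ}

/-- The iterated basis difference of the lattice delta function in the directions `σ`: the source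
of a multipoleSource of order `n`. -/
def multipoleSource {n : ℕ} (σ : Fin n → Fin d) : (Fin d → ℤ) → ℝ :=
  iterDiff ((List.ofFn σ).map basisVec) (Pi.single 0 1)

theorem multipoleSource_comp_perm {n : ℕ} (π : Equiv.Perm (Fin n)) (σ : Fin n → Fin d) :
    multipoleSource (σ ∘ π) = multipoleSource σ :=
  iterDiff_perm ((Equiv.Perm.ofFn_comp_perm π σ).map _) _

theorem finite_support_multipoleSource {n : ℕ} (σ : Fin n → Fin d) :
    (multipoleSource σ).support.Finite :=
  finite_support_iterDiff _ ((Set.finite_singleton 0).subset Pi.support_single_subset)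

theorem tsum_multipoleSource_mul {n : ℕ} (σ : Fin n → Fin d) (q : (Fin d → ℤ) → ℝ) :
    ∑' x, (multipoleSource σ * q) x =
      iterDiff (((List.ofFn σ).map basisVec).map Neg.neg) q 0 := by
  rw [multipoleSource,
    tsum_iterDiff_mul _ ((Set.finite_singleton 0).subset Pi.support_single_subset),
    tsum_eq_single 0 fun x hx => by simp [hx]]
  simp

theorem eq_zero_of_tsum_multipoleSource_mul_eq_zero {p : ℕ} {q : (Fin d → ℤ) → ℝ}
    (hq : q ∈ discretePoly (Fin d → ℤ) p)
    (h : ∀ n < p, ∀ σ : Fin n → Fin d, ∑' x, (multipoleSource σ * q) x = 0) : q = 0 := by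
  have hneg : (fun x => q (-x)) = 0 := by
    refine eq_zero_of_jet_eq_zero (comp_neg_mem_discretePoly hq) fun l hl => ?_
    have := h l.length hl l.get
    rw [tsum_multipoleSource_mul, List.ofFn_get] at this
    have hrefl := iterDiff_comp_const_sub (l.map basisVec) 0 q
    simp only [zero_sub] at hrefl
    simpa only [hrefl, neg_zero] using this
  funext x
  simpa using congrFun hneg (-x)

/-- The functional sending a discrete polynomial of degree `< p` to its moment against `g`. -/
def momentFunctional {p : ℕ} {g : (Fin d → ℤ) → ℝ}
    (hg : ∀ q ∈ discretePoly (Fin d → ℤ) p, Summable (g * q)) :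
    Module.Dual ℝ (discretePoly (Fin d → ℤ) p) where
  toFun q := ∑' x, (g * q.1) x
  map_add' q q' := by
    rw [← (hg q q.2).tsum_add (hg q' q'.2), Submodule.coe_add, mul_add]
    rfl
  map_smul' c q := by
    rw [Submodule.coe_smul, mul_smul_comm]
    exact tsum_const_smul'' c

theorem exists_moment_eq_sum_multipoleSource {p : ℕ} {f : (Fin d → ℤ) → ℝ}
    (hf : ∀ q ∈ discretePoly (Fin d → ℤ) p, Summable (f * q)) :
    ∃ c : (n : ℕ) → (Fin n → Fin d) → ℝ, ∀ q ∈ discretePoly (Fin d → ℤ) p,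
      ∑' x, (f * q) x =
        ∑ n ∈ Finset.range p, ∑ σ, c n σ * ∑' x, (multipoleSource (n := n) σ * q) x := by
  have hsource := fun (i : (n : Fin p) × (Fin n → Fin d)) q
    (_ : q ∈ discretePoly (Fin d → ℤ) p) =>
      summable_mul_of_finite_support (finite_support_multipoleSource i.2) q
  have hker : ⨅ i, LinearMap.ker (momentFunctional (hsource i)) ≤
      LinearMap.ker (momentFunctional hf) := by
    intro q hq
    have hq0 : q = 0 := Subtype.ext (eq_zero_of_tsum_multipoleSource_mul_eq_zero q.2 fun n hn σ =>
      (Submodule.mem_iInf _).1 hq ⟨⟨n, hn⟩, σ⟩)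
    exact hq0 ▸ Submodule.zero_mem _
  obtain ⟨c, hc⟩ := (Submodule.mem_span_range_iff_exists_fun ℝ).1
    (mem_span_of_iInf_ker_le_ker hker)
  refine ⟨fun n σ => if hn : n < p then c ⟨⟨n, hn⟩, σ⟩ else 0, fun q hq => ?_⟩
  have hcq := LinearMap.congr_fun hc ⟨q, hq⟩
  rw [LinearMap.sum_apply, Fintype.sum_sigma] at hcq
  simp only [Finset.sum_range, Fin.is_lt, dif_pos]
  exact hcq.symm

theorem exists_multipole_coeffs {p α : ℕ} {f : (Fin d → ℤ) → ℝ}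
    (hf : f ∈ decay (Fin d → ℤ) (d + p) α) :
    ∃ b : (n : ℕ) → (Fin n → Fin d) → ℝ,
      (∀ n (π : Equiv.Perm (Fin n)) σ, b n (σ ∘ π) = b n σ) ∧
      HasVanishingMoments p (f - ∑ n ∈ Finset.range p, ∑ σ, b n σ • multipoleSource σ) := by
  have hfq := fun q (hq : q ∈ discretePoly (Fin d → ℤ) p) =>
    summable_mul_of_mem_discretePoly hf hq
  obtain ⟨c, hc⟩ := exists_moment_eq_sum_multipoleSource hfq
  choose b hb hbc using fun n => exists_symmetric_coeffs
    (T := multipoleSource (d := d) (n := n)) multipoleSource_comp_perm (c n)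
  refine ⟨b, hb, fun q hq => ?_⟩
  simp only [hbc, sub_mul, Finset.sum_mul, smul_mul_assoc]
  rw [← sub_self (∑' x, (f * q) x)]
  refine (hfq q hq).hasSum.sub ?_
  rw [hc q hq]
  have hfun : ∑ n ∈ Finset.range p, ∑ σ, c n σ • (multipoleSource (n := n) σ * q) =
      fun x => ∑ n ∈ Finset.range p, ∑ σ, c n σ • (multipoleSource σ * q) x := by
    funext x
    simp only [Finset.sum_apply, Pi.smul_apply]
  rw [hfun]
  exact hasSum_sum fun n _ => hasSum_sum fun σ _ =>
    (summable_mul_of_finite_support (finite_support_multipoleSource σ) q).hasSum.const_smul (c n σ)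

end MultipoleCoefficients

/-! ### Convolution against a density with vanishing moments -/

section KernelTaylor

/-- `Φ` decays like `⟨x⟩⁻ᵉ`, and each difference improves the rate by one power, as for the
differences of a lattice Green's function. -/
def IsDecayingKernel {Λ : Type*} [SeminormedAddCommGroup Λ] (e : ℕ) (Φ : Λ → ℝ) : Prop :=
  ∀ l : List Λ, iterDiff l Φ ∈ decay Λ (e + l.length) 0

theorem IsDecayingKernel.self_mem_decay {Λ : Type*} [SeminormedAddCommGroup Λ] {e : ℕ} {Φ : Λ → ℝ}
    (hΦ : IsDecayingKernel e Φ) : Φ ∈ decay Λ e 0 :=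
  hΦ []

theorem IsDecayingKernel.diff {Λ : Type*} [SeminormedAddCommGroup Λ] {e : ℕ} {Φ : Λ → ℝ}
    (hΦ : IsDecayingKernel e Φ) (a : Λ) : IsDecayingKernel (e + 1) (diff a Φ) := by
  intro l
  rw [← diff_iterDiff, ← iterDiff_cons, add_assoc, add_comm 1]
  exact hΦ (a :: l)

variable {d e : ℕ} {Φ : (Fin d → ℤ) → ℝ}

/-- The Taylor polynomial of degree `< p` of `m ↦ Φ (x - m)` at the origin. -/
def kernelTaylor (p : ℕ) (Φ : (Fin d → ℤ) → ℝ) (x : Fin d → ℤ) : (Fin d → ℤ) → ℝ :=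
  taylorPoly p fun m => Φ (x - m)

theorem kernelTaylor_mem_discretePoly (p : ℕ) (Φ : (Fin d → ℤ) → ℝ) (x : Fin d → ℤ) :
    kernelTaylor p Φ x ∈ discretePoly (Fin d → ℤ) p :=
  taylorPoly_mem_discretePoly p _

theorem jet_kernelTaylor {p : ℕ} (Φ : (Fin d → ℤ) → ℝ) (x : Fin d → ℤ) {l : List (Fin d)}
    (hl : l.length < p) :
    iterDiff (l.map basisVec) (kernelTaylor p Φ x) 0 =
      iterDiff (l.map basisVec) (fun m => Φ (x - m)) 0 :=
  jet_taylorPoly _ hl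

theorem iterDiff_kernelTaylor_eq_zero {p : ℕ} (Φ : (Fin d → ℤ) → ℝ) (x : Fin d → ℤ)
    {l : List (Fin d → ℤ)} (hl : l.length = p) : iterDiff l (kernelTaylor p Φ x) = 0 :=
  mem_discretePoly_zero.1 (iterDiff_mem_discretePoly l
    (by simpa [hl] using kernelTaylor_mem_discretePoly p Φ x))

theorem IsDecayingKernel.exists_jet_bound (hΦ : IsDecayingKernel e Φ) (p : ℕ) :
    ∃ B : ℝ, 0 ≤ B ∧ ∀ l : List (Fin d), l.length ≤ p → ∀ x m,
      |iterDiff (l.map basisVec) (fun m => Φ (x - m)) m| ≤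
        B / bracket (x - m) ^ (e + l.length) := by
  choose B hB0 hB using fun l : List (Fin d) =>
    exists_bound_of_mem_decay (hΦ ((l.map basisVec).map Neg.neg))
  have hfin : {l : List (Fin d) | l.length ≤ p}.Finite := List.finite_length_le _ p
  refine ⟨∑ l ∈ hfin.toFinset, B l, Finset.sum_nonneg fun l _ => hB0 l, fun l hl x m => ?_⟩
  have hBl : B l ≤ ∑ l ∈ hfin.toFinset, B l :=
    Finset.single_le_sum (fun l _ => hB0 l) (hfin.mem_toFinset.2 hl)
  have hpos := bracket_pos (x - m)
  rw [iterDiff_comp_const_sub]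
  refine (hB l (x - m)).trans ?_
  rw [decayRate, pow_zero, mul_one_div, List.length_map, List.length_map]
  gcongr

theorem IsDecayingKernel.exists_taylor_remainder_bound (hΦ : IsDecayingKernel e Φ) (p : ℕ) :
    ∃ C : ℝ, 0 ≤ C ∧ ∀ x m, 2 * ‖m‖ ≤ ‖x‖ →
      |Φ (x - m) - kernelTaylor p Φ x m| ≤ C * bracket m ^ p / bracket x ^ (e + p) := by
  obtain ⟨B, hB0, hB⟩ := hΦ.exists_jet_bound p
  refine ⟨d ^ p * (B * 2 ^ (e + p)), by positivity, fun x m hm => ?_⟩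
  have hx := bracket_pos x
  have hremainder : ∀ l : List (Fin d), l.length = p → ∀ z, ‖z‖ ≤ ‖m‖ →
      |iterDiff (l.map basisVec) ((fun m => Φ (x - m)) - kernelTaylor p Φ x) z| ≤
        B * 2 ^ (e + p) / bracket x ^ (e + p) := by
    intro l hl z hz
    have hpos := bracket_pos (x - z)
    have hxz : bracket x / 2 ≤ bracket (x - z) := by
      have := bracket_le_add_norm x (-z)
      rw [norm_neg, ← sub_eq_add_neg] at this
      unfold bracket at *
      linarith
    rw [map_sub, iterDiff_kernelTaylor_eq_zero Φ x (by simpa using hl), sub_zero]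
    refine (hB l hl.le x z).trans ?_
    rw [hl, mul_div_assoc, ← div_pow, div_eq_mul_inv, ← inv_pow]
    gcongr
    rw [inv_le_comm₀ hpos (by positivity), inv_div]
    exact hxz
  have h := abs_le_of_jet_le (B := 0) (f := (fun m => Φ (x - m)) - kernelTaylor p Φ x)
    (fun _ => le_rfl) (by positivity)
    (fun l hl => by simp [map_sub, jet_kernelTaylor Φ x hl]) hremainder le_rfl
  simp only [Pi.zero_apply, mul_zero, Finset.sum_const_zero, zero_add, mul_pow] at h
  refine h.trans ?_
  calc (d : ℝ) ^ p * ‖m‖ ^ p * (B * 2 ^ (e + p) / bracket x ^ (e + p))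
      ≤ d ^ p * bracket m ^ p * (B * 2 ^ (e + p) / bracket x ^ (e + p)) := by
        gcongr
        exact norm_le_bracket m
    _ = _ := by ring

theorem IsDecayingKernel.exists_taylor_bound (hΦ : IsDecayingKernel e Φ) (p : ℕ) :
    ∃ C : ℝ, 0 ≤ C ∧ ∀ x m, bracket x ≤ 2 * bracket m →
      |kernelTaylor p Φ x m| * bracket m ≤ C * bracket m ^ p / bracket x ^ (e + p) * bracket x := by
  obtain ⟨B, hB0, hB⟩ := hΦ.exists_jet_bound p
  refine ⟨∑ k ∈ Finset.range p, d ^ k * B * 2 ^ p, by positivity, fun x m hxm => ?_⟩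
  have hx := bracket_pos x
  have hm := bracket_pos m
  have h := abs_le_of_jet_le (p := p) (B := fun k => B / bracket x ^ (e + k))
    (f := kernelTaylor p Φ x) (fun k => by positivity) le_rfl
    (fun l hl => by
      rw [jet_kernelTaylor Φ x hl]
      simpa using hB l hl.le x 0)
    (fun l hl z _ => by simp [iterDiff_kernelTaylor_eq_zero Φ x (l := l.map basisVec) (by simpa)])
    (norm_le_bracket m)
  rw [mul_zero, add_zero] at h
  refine (mul_le_mul_of_nonneg_right h hm.le).trans ?_
  rw [Finset.sum_mul, Finset.sum_mul, Finset.sum_div, Finset.sum_mul]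
  refine Finset.sum_le_sum fun k hk => ?_
  obtain ⟨j, rfl⟩ := Nat.exists_eq_add_of_lt (Finset.mem_range.1 hk)
  have hratio : bracket x ^ j ≤ 2 ^ (k + j + 1) * bracket m ^ j :=
    calc bracket x ^ j ≤ (2 * bracket m) ^ j := by gcongr
      _ ≤ _ := by
        rw [mul_pow]
        gcongr
        · exact one_le_two
        · omega
  calc (d * bracket m) ^ k * (B / bracket x ^ (e + k)) * bracket m
      = d ^ k * B * bracket m ^ (k + 1) * bracket x ^ j / bracket x ^ (e + k + j) := by
        rw [pow_add _ (e + k) j, mul_pow]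
        field_simp
        ring
    _ ≤ d ^ k * B * bracket m ^ (k + 1) * (2 ^ (k + j + 1) * bracket m ^ j) /
          bracket x ^ (e + k + j) := by gcongr
    _ = _ := by
      rw [← add_assoc, ← add_assoc, pow_succ (bracket x)]
      field_simp
      ring

end KernelTaylor

section Convolution

theorem mul_mem_decay_add {Λ : Type*} [SeminormedAddCommGroup Λ] {m n α β : ℕ} {f g : Λ → ℝ}
    (hf : f ∈ decay Λ m α) (hg : g ∈ decay Λ n β) : f * g ∈ decay Λ (m + n) (α + β) := by
  refine (Asymptotics.IsBigO.mul hf hg).congr_right fun x => ?_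
  simp only [decayRate]
  rw [div_mul_div_comm, pow_add, pow_add]

variable {d e p α : ℕ} {Φ g : (Fin d → ℤ) → ℝ}

theorem exists_sum_mul_bracket_pow_le_log (hg : g ∈ decay (Fin d → ℤ) (d + p) α) :
    ∃ C : ℝ, 0 ≤ C ∧ ∀ (F : Finset (Fin d → ℤ)) (τ : ℝ), 2 ≤ τ → (∀ m ∈ F, bracket m ≤ τ) →
      ∑ m ∈ F, |g m| * bracket m ^ p ≤ C * Real.log τ ^ (α + 1) := by
  obtain ⟨G, hG0, hG⟩ := exists_bound_of_mem_decay hg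
  obtain ⟨S, hS0, hS⟩ := exists_sum_inv_bracket_pow_le_log d
  refine ⟨G * S, by positivity, fun F τ hτ hF => ?_⟩
  have hlogτ : 0 ≤ Real.log τ := Real.log_nonneg (by linarith)
  calc ∑ m ∈ F, |g m| * bracket m ^ p ≤ ∑ m ∈ F, G * Real.log τ ^ α * (bracket m ^ d)⁻¹ := by
        refine Finset.sum_le_sum fun m hm => ?_
        have hpos := bracket_pos m
        calc |g m| * bracket m ^ p ≤ G * decayRate (d + p) α (bracket m) * bracket m ^ p := by
              gcongr
              exact hG m
          _ = G * Real.log (bracket m) ^ α * (bracket m ^ d)⁻¹ := by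
              unfold decayRate
              rw [pow_add]
              field_simp
          _ ≤ _ := by
              gcongr
              · exact Real.log_nonneg (one_le_bracket m)
              · exact hF m hm
    _ ≤ G * Real.log τ ^ α * (S * Real.log τ) := by
        rw [← Finset.mul_sum]
        gcongr
        exact hS F τ hτ hF
    _ = _ := by ring

theorem exists_sum_mul_bracket_pow_div_le (hg : g ∈ decay (Fin d → ℤ) (d + p) α) :
    ∃ C : ℝ, 0 ≤ C ∧ ∀ (F : Finset (Fin d → ℤ)) (τ : ℝ), 2 ≤ τ → (∀ m ∈ F, τ ≤ 2 * bracket m) →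
      ∑ m ∈ F, |g m| * bracket m ^ p / bracket m ≤ C * decayRate 1 α τ := by
  obtain ⟨G, hG0, hG⟩ := exists_bound_of_mem_decay hg
  obtain ⟨S, hS0, hS⟩ := exists_sum_decayRate_tail_le d α
  obtain ⟨K, hK0, hK⟩ := decayRate_le_of_comparable 1 α one_le_two
  refine ⟨G * (S * K), by positivity, fun F τ hτ hF => ?_⟩
  have hmax : ∀ m ∈ F, max 2 (τ / 2) ≤ bracket m := fun m hm =>
    max_le (two_le_bracket m) (by linarith [hF m hm])
  calc ∑ m ∈ F, |g m| * bracket m ^ p / bracket m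
      ≤ ∑ m ∈ F, G * decayRate (d + 1) α (bracket m) := by
        refine Finset.sum_le_sum fun m _ => ?_
        have hpos := bracket_pos m
        calc |g m| * bracket m ^ p / bracket m
            ≤ G * decayRate (d + p) α (bracket m) * bracket m ^ p / bracket m := by
              gcongr
              exact hG m
          _ = _ := by
              unfold decayRate
              rw [pow_add, pow_add]
              field_simp
    _ ≤ G * (S * decayRate 1 α (max 2 (τ / 2))) := by
        rw [← Finset.mul_sum]
        gcongr
        exact hS F _ (le_max_left _ _) hmax
    _ ≤ G * (S * (K * decayRate 1 α τ)) := by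
        gcongr
        refine hK _ _ (le_max_left _ _) hτ (max_le (by linarith) (by linarith)) ?_
        linarith [le_max_right 2 (τ / 2)]
    _ = _ := by ring

theorem exists_sum_kernel_mul_le (he : e ≤ d) (hΦ : Φ ∈ decay (Fin d → ℤ) e 0)
    (hg : g ∈ decay (Fin d → ℤ) (d + p) α) :
    ∃ C : ℝ, 0 ≤ C ∧ ∀ (F : Finset (Fin d → ℤ)) (x : Fin d → ℤ),
      (∀ m ∈ F, bracket x ≤ 2 * bracket m ∧ bracket (x - m) ≤ bracket x) →
      ∑ m ∈ F, |Φ (x - m) * g m| ≤ C * decayRate (e + p) (α + 1) (bracket x) := by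
  obtain ⟨B, hB0, hB⟩ := exists_bound_of_mem_decay hΦ
  obtain ⟨G, hG0, hG⟩ := exists_bound_of_mem_decay hg
  obtain ⟨S, hS0, hS⟩ := exists_sum_inv_bracket_pow_le_log d
  obtain ⟨K, hK0, hK⟩ := decayRate_le_of_comparable (d + p) α one_le_two
  obtain ⟨j, rfl⟩ := Nat.exists_eq_add_of_le he
  refine ⟨B * G * K * S, by positivity, fun F x hF => ?_⟩
  have hx := bracket_pos x
  have hrate := decayRate_nonneg (e + j + p) α (two_le_bracket x)
  have hterm : ∀ m ∈ F, |Φ (x - m) * g m| ≤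
      B * bracket x ^ j * (G * (K * decayRate (e + j + p) α (bracket x))) *
        (bracket (x - m) ^ (e + j))⁻¹ := by
    intro m hm
    obtain ⟨hxm, hmx⟩ := hF m hm
    have hpos := bracket_pos (x - m)
    have hmx' : bracket m ≤ 2 * bracket x := by
      have := bracket_sub_le x (x - m)
      rw [sub_sub_cancel] at this
      linarith
    have hΦm : |Φ (x - m)| ≤ B * bracket x ^ j * (bracket (x - m) ^ (e + j))⁻¹ :=
      calc |Φ (x - m)| ≤ B * bracket (x - m) ^ j * (bracket (x - m) ^ (e + j))⁻¹ := by
            refine (hB _).trans_eq ?_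
            rw [decayRate, pow_zero, pow_add]
            field_simp
        _ ≤ _ := by gcongr
    have hgm : |g m| ≤ G * (K * decayRate (e + j + p) α (bracket x)) :=
      (hG m).trans (mul_le_mul_of_nonneg_left
        (hK _ _ (two_le_bracket m) (two_le_bracket x) hmx' hxm) hG0)
    rw [abs_mul, mul_right_comm]
    exact mul_le_mul hΦm hgm (abs_nonneg _) (by positivity)
  have hsum : ∑ m ∈ F, (bracket (x - m) ^ (e + j))⁻¹ ≤ S * Real.log (bracket x) := by
    have h := hS (F.map ⟨fun m => x - m, sub_right_injective⟩) (bracket x) (two_le_bracket x)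
      (by simpa using fun m hm => (hF m hm).2)
    rwa [Finset.sum_map] at h
  refine (Finset.sum_le_sum hterm).trans ?_
  rw [← Finset.mul_sum]
  refine (mul_le_mul_of_nonneg_left hsum (by positivity)).trans_eq ?_
  unfold decayRate
  rw [pow_add _ (e + j), pow_add _ e j, pow_add _ e p, pow_succ]
  field_simp

theorem exists_kernel_bound (he : 1 ≤ e) (hΦ : Φ ∈ decay (Fin d → ℤ) e 0) (p : ℕ) :
    ∃ C : ℝ, 0 ≤ C ∧ ∀ x m, bracket x ≤ 2 * bracket m → bracket x ≤ bracket (x - m) →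
      |Φ (x - m)| * bracket m ≤ C * bracket m ^ p / bracket x ^ (e + p) * bracket x := by
  obtain ⟨B, hB0, hB⟩ := exists_bound_of_mem_decay hΦ
  obtain ⟨n, rfl⟩ := Nat.exists_eq_add_of_le' he
  refine ⟨B * 2 ^ (n + 1) * 2 ^ (n + p), by positivity, fun x m hxm hmx => ?_⟩
  have hx := bracket_pos x
  have hm := bracket_pos m
  have hmx' : bracket m ≤ 2 * bracket (x - m) := by
    have := bracket_sub_le x (x - m)
    rw [sub_sub_cancel] at this
    linarith
  calc |Φ (x - m)| * bracket m ≤ B / bracket (x - m) ^ (n + 1) * bracket m := by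
        gcongr
        simpa [decayRate, div_eq_mul_inv] using hB (x - m)
    _ ≤ B / (bracket m / 2) ^ (n + 1) * bracket m := by
        gcongr
        linarith
    _ = B * 2 ^ (n + 1) * bracket m ^ p / bracket m ^ (n + p) := by
        rw [div_pow, pow_succ, pow_add _ n p]
        field_simp
    _ ≤ B * 2 ^ (n + 1) * bracket m ^ p / (bracket x / 2) ^ (n + p) := by
        gcongr
        linarith
    _ = _ := by
        rw [div_pow, pow_add _ (n + 1), pow_add _ n p, pow_succ (bracket x)]
        field_simp

theorem sum_mul_le_of_bound {F : Finset (Fin d → ℤ)} {Ψ : (Fin d → ℤ) → ℝ} {A B τ : ℝ}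
    (hτ : 2 ≤ τ) (hA : 0 ≤ A) (hB : 0 ≤ B)
    (hΨ : ∀ m ∈ F, |Ψ m| * bracket m ≤ A * bracket m ^ p / τ ^ (e + p) * τ)
    (hg : ∑ m ∈ F, |g m| * bracket m ^ p / bracket m ≤ B * decayRate 1 α τ) :
    ∑ m ∈ F, |Ψ m * g m| ≤ A * B * 2 * decayRate (e + p) (α + 1) τ := by
  calc ∑ m ∈ F, |Ψ m * g m|
      ≤ ∑ m ∈ F, A / τ ^ (e + p) * τ * (|g m| * bracket m ^ p / bracket m) := by
        refine Finset.sum_le_sum fun m hm => ?_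
        have hpos := bracket_pos m
        rw [abs_mul]
        refine (mul_le_mul_of_nonneg_right ((le_div_iff₀ hpos).2 (hΨ m hm))
          (abs_nonneg _)).trans_eq ?_
        ring
    _ ≤ A / τ ^ (e + p) * τ * (B * decayRate 1 α τ) := by
        rw [← Finset.mul_sum]
        gcongr
    _ = A * B * decayRate (e + p) α τ := by
        unfold decayRate
        field_simp
    _ ≤ A * B * (2 ^ 1 * decayRate (e + p) (α + 1) τ) := by
        gcongr
        exact decayRate_le_add_right _ α 1 hτ
    _ = _ := by ring

theorem IsDecayingKernel.exists_sum_near_le (hΦ : IsDecayingKernel e Φ)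
    (hg : g ∈ decay (Fin d → ℤ) (d + p) α) :
    ∃ C : ℝ, 0 ≤ C ∧ ∀ (F : Finset (Fin d → ℤ)) (x : Fin d → ℤ), (∀ m ∈ F, 2 * ‖m‖ ≤ ‖x‖) →
      ∑ m ∈ F, |(Φ (x - m) - kernelTaylor p Φ x m) * g m| ≤
        C * decayRate (e + p) (α + 1) (bracket x) := by
  obtain ⟨A, hA0, hA⟩ := hΦ.exists_taylor_remainder_bound p
  obtain ⟨S, hS0, hS⟩ := exists_sum_mul_bracket_pow_le_log hg
  refine ⟨A * S, by positivity, fun F x hF => ?_⟩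
  have hx := bracket_pos x
  calc ∑ m ∈ F, |(Φ (x - m) - kernelTaylor p Φ x m) * g m|
      ≤ ∑ m ∈ F, A / bracket x ^ (e + p) * (|g m| * bracket m ^ p) := by
        refine Finset.sum_le_sum fun m hm => ?_
        rw [abs_mul]
        refine (mul_le_mul_of_nonneg_right (hA x m (hF m hm)) (abs_nonneg _)).trans_eq ?_
        ring
    _ ≤ A / bracket x ^ (e + p) * (S * Real.log (bracket x) ^ (α + 1)) := by
        rw [← Finset.mul_sum]
        gcongr
        refine hS F _ (two_le_bracket x) fun m hm => ?_
        unfold bracket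
        linarith [hF m hm, norm_nonneg m]
    _ = _ := by
        unfold decayRate
        ring

theorem IsDecayingKernel.exists_sum_far_le (hΦ : IsDecayingKernel e Φ) (he : 1 ≤ e) (hed : e ≤ d)
    (hg : g ∈ decay (Fin d → ℤ) (d + p) α) :
    ∃ C : ℝ, 0 ≤ C ∧ ∀ (F : Finset (Fin d → ℤ)) (x : Fin d → ℤ),
      (∀ m ∈ F, bracket x ≤ 2 * bracket m) →
      ∑ m ∈ F, |(Φ (x - m) - kernelTaylor p Φ x m) * g m| ≤
        C * decayRate (e + p) (α + 1) (bracket x) := by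
  obtain ⟨A₁, hA₁, hpoly⟩ := hΦ.exists_taylor_bound p
  obtain ⟨A₂, hA₂, hkernel⟩ := exists_kernel_bound he hΦ.self_mem_decay p
  obtain ⟨M, hM, hmid⟩ := exists_sum_kernel_mul_le hed hΦ.self_mem_decay hg
  obtain ⟨S, hS0, hS⟩ := exists_sum_mul_bracket_pow_div_le hg
  refine ⟨M + A₂ * S * 2 + A₁ * S * 2, by positivity, fun F x hF => ?_⟩
  have hτ := two_le_bracket x
  have hsplit : ∑ m ∈ F, |(Φ (x - m) - kernelTaylor p Φ x m) * g m| ≤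
      ∑ m ∈ F, |Φ (x - m) * g m| + ∑ m ∈ F, |kernelTaylor p Φ x m * g m| := by
    rw [← Finset.sum_add_distrib]
    exact Finset.sum_le_sum fun m _ => by
      rw [sub_mul]
      exact abs_sub _ _
  rw [← Finset.sum_filter_add_sum_filter_not F (fun m => bracket (x - m) ≤ bracket x)
    fun m => |Φ (x - m) * g m|] at hsplit
  have hFmid := hmid (F.filter fun m => bracket (x - m) ≤ bracket x) x fun m hm =>
    ⟨hF m (Finset.mem_of_mem_filter m hm), (Finset.mem_filter.1 hm).2⟩
  have hFtail := sum_mul_le_of_bound (g := g) (F := F.filter fun m => ¬bracket (x - m) ≤ bracket x)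
    (Ψ := fun m => Φ (x - m)) hτ hA₂ hS0
    (fun m hm => hkernel x m (hF m (Finset.mem_of_mem_filter m hm))
      (not_le.1 (Finset.mem_filter.1 hm).2).le)
    (hS _ _ hτ fun m hm => hF m (Finset.mem_of_mem_filter m hm))
  have hFpoly := sum_mul_le_of_bound hτ hA₁ hS0 (fun m hm => hpoly x m (hF m hm)) (hS F _ hτ hF)
  linarith

theorem IsDecayingKernel.exists_sum_le (hΦ : IsDecayingKernel e Φ) (he : 1 ≤ e) (hed : e ≤ d)
    (hg : g ∈ decay (Fin d → ℤ) (d + p) α) :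
    ∃ C : ℝ, ∀ (F : Finset (Fin d → ℤ)) (x : Fin d → ℤ),
      ∑ m ∈ F, |(Φ (x - m) - kernelTaylor p Φ x m) * g m| ≤
        C * decayRate (e + p) (α + 1) (bracket x) := by
  obtain ⟨C₁, -, hnear⟩ := hΦ.exists_sum_near_le hg
  obtain ⟨C₂, -, hfar⟩ := hΦ.exists_sum_far_le he hed hg
  refine ⟨C₁ + C₂, fun F x => ?_⟩
  rw [← Finset.sum_filter_add_sum_filter_not F fun m => 2 * ‖m‖ ≤ ‖x‖, add_mul]
  refine add_le_add (hnear _ x fun m hm => (Finset.mem_filter.1 hm).2) (hfar _ x fun m hm => ?_)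
  have := not_le.1 (Finset.mem_filter.1 hm).2
  unfold bracket
  linarith

theorem summable_kernel_mul (he : 1 ≤ e) (hΦ : Φ ∈ decay (Fin d → ℤ) e 0)
    (hg : g ∈ decay (Fin d → ℤ) (d + p) α) (x : Fin d → ℤ) :
    Summable fun m => Φ (x - m) * g m := by
  have hshift : (fun m => Φ (x - m)) ∈ decay (Fin d → ℤ) e 0 := by
    have h := shiftInvariant_decay e 0 (-x) _ (comp_neg_mem_decay hΦ)
    have heq : shift (-x) (fun y => Φ (-y)) = fun m => Φ (x - m) := by
      funext m
      rw [shift_apply, neg_add_rev, neg_neg, sub_eq_add_neg]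
    rwa [heq] at h
  exact summable_of_mem_decay (decay_anti_left (by omega) _ (mul_mem_decay_add hshift hg))

/-- Subtracting from `Φ (x - ·)` its Taylor polynomial, which does not change the integral against
a density with vanishing moments, gains the factor `⟨x⟩⁻ᵖ`. -/
theorem IsDecayingKernel.tsum_mul_mem_decay (hΦ : IsDecayingKernel e Φ) (he : 1 ≤ e) (hed : e ≤ d)
    (hg : g ∈ decay (Fin d → ℤ) (d + p) α) (hmom : HasVanishingMoments p g) :
    (fun x => ∑' m, Φ (x - m) * g m) ∈ decay (Fin d → ℤ) (e + p) (α + 1) := by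
  obtain ⟨C, hC⟩ := hΦ.exists_sum_le he hed hg
  refine mem_decay (C := C) fun x => ?_
  have hsum : HasSum (fun m => (Φ (x - m) - kernelTaylor p Φ x m) * g m)
      (∑' m, Φ (x - m) * g m) := by
    have h := (summable_kernel_mul he hΦ.self_mem_decay hg x).hasSum.sub
      (hmom _ (kernelTaylor_mem_discretePoly p Φ x))
    rw [sub_zero] at h
    simpa only [sub_mul, Pi.mul_apply, mul_comm (g _)] using h
  exact le_of_tendsto' hsum.abs fun F => (Finset.abs_sum_le_sum_abs _ F).trans (hC F x)

end Convolution

/-! ### Smooth cutoffs -/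

section Cutoff

theorem norm_second_difference_le {E F : Type*} [NormedAddCommGroup E] [NormedSpace ℝ E]
    [NormedAddCommGroup F] [NormedSpace ℝ F] {f : E → F} {K : NNReal} (hf : Differentiable ℝ f)
    (hf' : LipschitzWith K (fderiv ℝ f)) (x h k : E) :
    ‖f (x + k + h) - f (x + k) - (f (x + h) - f x)‖ ≤ K * ‖h‖ * ‖k‖ := by
  have hderiv : ∀ y, HasFDerivAt (fun y => f (y + h) - f y) (fderiv ℝ f (y + h) - fderiv ℝ f y) y :=
    fun y => ((hasFDerivAt_comp_add_right h).2 (hf (y + h)).hasFDerivAt).sub (hf y).hasFDerivAt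
  have hbound : ∀ y, ‖fderiv ℝ f (y + h) - fderiv ℝ f y‖ ≤ K * ‖h‖ := fun y => by
    simpa using hf'.norm_sub_le (y + h) y
  simpa using convex_univ.norm_image_sub_le_of_norm_hasFDerivWithin_le
    (fun y _ => (hderiv y).hasFDerivWithinAt) (fun y _ => hbound y) (Set.mem_univ x)
    (Set.mem_univ (x + k))

variable {d : ℕ}

/-- A bump function equal to `1` on the unit ball and supported in the ball of radius `2`. -/
def unitBump (d : ℕ) : ContDiffBump (0 : Fin d → ℝ) := ⟨1, 2, one_pos, one_lt_two⟩

/-- The integer point `m` seen at scale `r`. -/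
def rescale (r : ℝ) (m : Fin d → ℤ) : Fin d → ℝ := fun i => m i / r

theorem rescale_add (r : ℝ) (m a : Fin d → ℤ) : rescale r (m + a) = rescale r m + rescale r a := by
  funext i
  simp only [rescale, Pi.add_apply, Int.cast_add, add_div]

theorem norm_rescale {r : ℝ} (hr : 0 < r) (m : Fin d → ℤ) : ‖rescale r m‖ = ‖m‖ / r := by
  have h : rescale r m = r⁻¹ • fun i => (m i : ℝ) := by
    funext i
    simp only [rescale, Pi.smul_apply, smul_eq_mul, div_eq_inv_mul]
  have hcast : ‖fun i => (m i : ℝ)‖ = ‖m‖ := rfl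
  rw [h, norm_smul, hcast, Real.norm_of_nonneg (by positivity), inv_mul_eq_div]

/-- A smooth cutoff at scale `r`. -/
def cutoff (r : ℝ) : (Fin d → ℤ) → ℝ := fun m => unitBump d (rescale r m)

theorem cutoff_eq_one {r : ℝ} (hr : 0 < r) {m : Fin d → ℤ} (hm : ‖m‖ ≤ r) : cutoff r m = 1 := by
  refine (unitBump d).one_of_mem_closedBall ?_
  rw [mem_closedBall_zero_iff, norm_rescale hr]
  exact (div_le_one hr).2 hm

theorem cutoff_eq_zero {r : ℝ} (hr : 0 < r) {m : Fin d → ℤ} (hm : 2 * r ≤ ‖m‖) :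
    cutoff r m = 0 := by
  refine (unitBump d).zero_of_le_dist ?_
  rw [dist_zero_right, norm_rescale hr]
  exact (le_div_iff₀ hr).2 hm

theorem abs_cutoff_le_one (r : ℝ) (m : Fin d → ℤ) : |cutoff r m| ≤ 1 := by
  rw [cutoff, abs_of_nonneg (unitBump d).nonneg]
  exact (unitBump d).le_one

theorem finite_support_cutoff {r : ℝ} (hr : 0 < r) : (cutoff (d := d) r).support.Finite := by
  refine (isCompact_closedBall (0 : Fin d → ℤ) (2 * r)).finite_of_discrete.subset fun m hm => ?_
  rw [mem_closedBall_zero_iff]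
  exact (not_le.1 fun h => hm (cutoff_eq_zero hr h)).le

theorem exists_abs_diff_cutoff_le (a : Fin d → ℤ) :
    ∃ C : ℝ, 0 ≤ C ∧ ∀ r > 0, ∀ m, |diff a (cutoff r) m| ≤ C / r := by
  obtain ⟨K, hK⟩ := ((unitBump d).contDiff (n := 1)).lipschitzWith_of_hasCompactSupport
    (unitBump d).hasCompactSupport one_ne_zero
  refine ⟨K * ‖a‖, by positivity, fun r hr m => ?_⟩
  have h := hK.norm_sub_le (rescale r m + rescale r a) (rescale r m)
  rwa [add_sub_cancel_left, norm_rescale hr, ← rescale_add, ← mul_div_assoc] at h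

theorem exists_abs_diff_diff_cutoff_le (a b : Fin d → ℤ) :
    ∃ C : ℝ, 0 ≤ C ∧ ∀ r > 0, ∀ m, |diff a (diff b (cutoff r)) m| ≤ C / r ^ 2 := by
  obtain ⟨K, hK⟩ := ((unitBump d).contDiff (n := 2)).fderiv_right (m := 1) le_rfl
    |>.lipschitzWith_of_hasCompactSupport ((unitBump d).hasCompactSupport.fderiv ℝ) one_ne_zero
  refine ⟨K * ‖b‖ * ‖a‖, by positivity, fun r hr m => ?_⟩
  have h := norm_second_difference_le
    ((unitBump d).contDiff.differentiable (n := 1) one_ne_zero) hK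
    (rescale r m) (rescale r b) (rescale r a)
  rw [norm_rescale hr, norm_rescale hr, ← rescale_add, ← rescale_add, ← rescale_add] at h
  refine h.trans_eq ?_
  field_simp

theorem diff_cutoff_eq_zero {r : ℝ} (hr : 0 < r) {a m : Fin d → ℤ} (hm : ‖m‖ + ‖a‖ ≤ r) :
    diff a (cutoff r) m = 0 := by
  rw [diff_apply, cutoff_eq_one hr ((norm_add_le m a).trans hm),
    cutoff_eq_one hr (by linarith [norm_nonneg a]), sub_self]

theorem exists_forall_norm_ge_abs_le {w : (Fin d → ℤ) → ℝ} (hw : Tendsto w cofinite (𝓝 0)) {ε : ℝ}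
    (hε : 0 < ε) : ∃ k : ℕ, ∀ m, k ≤ ‖m‖ → |w m| ≤ ε := by
  have hfin : {m | ¬|w m| < ε}.Finite := by
    simpa [Real.dist_eq] using hw.eventually (Metric.ball_mem_nhds 0 hε)
  obtain ⟨r, hr⟩ := hfin.isBounded.exists_norm_le
  obtain ⟨k, hk⟩ := exists_nat_gt r
  exact ⟨k, fun m hm => (not_not.1 fun h => (hk.trans_le hm).not_ge (hr m h)).le⟩

theorem exists_abs_le_mul_norm_add {v : (Fin d → ℤ) → ℝ}
    (hv : ∀ e, Tendsto (diff e v) cofinite (𝓝 0)) {ε : ℝ} (hε : 0 < ε) :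
    ∃ B : ℝ, ∀ m, |v m| ≤ ε * ‖m‖ + B := by
  have hε' : 0 < ε / (d + 1) := by positivity
  choose k hk using fun i => exists_forall_norm_ge_abs_le (hv (basisVec i)) hε'
  have hball : (Metric.closedBall (0 : Fin d → ℤ) (∑ i, k i : ℕ)).Finite :=
    (isCompact_closedBall _ _).finite_of_discrete
  obtain ⟨B, hB⟩ := (hball.image fun z => |v z|).bddAbove
  refine ⟨B, fun m => ?_⟩
  have h := abs_le_of_abs_diff_basisVec_le (V := v) hε'.le
    (fun z i hz _ => hk i z ((Nat.cast_le.2 (Finset.single_le_sum (fun _ _ => zero_le)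
      (Finset.mem_univ i))).trans hz))
    (fun z hz => hB (Set.mem_image_of_mem _ (mem_closedBall_zero_iff.2 hz))) (le_refl ‖m‖)
  have hd : ε / (d + 1) * (d * ‖m‖) ≤ ε * ‖m‖ := by
    rw [← mul_assoc]
    gcongr
    rw [div_mul_eq_mul_div]
    exact (div_le_iff₀ (by positivity)).2 (by nlinarith)
  exact h.trans (add_le_add_left
    ((mul_le_mul_of_nonneg_left (sum_natAbs_le m) hε'.le).trans hd) B)

theorem isLittleO_inv_iff {β : Type*} {h : ℝ → β → ℝ} :
    (fun q : ℝ × β => h q.1 q.2) =o[atTop ×ˢ ⊤] (fun q => q.1⁻¹) ↔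
      ∀ ε > 0, ∀ᶠ r in atTop, ∀ m, |h r m| ≤ ε / r := by
  rw [Asymptotics.isLittleO_iff]
  refine forall₂_congr fun ε _ => ?_
  rw [Filter.Eventually, mem_prod_top]
  refine eventually_congr ((eventually_gt_atTop 0).mono fun r hr => forall_congr' fun m => ?_)
  rw [Set.mem_ofPred_eq, Real.norm_eq_abs, norm_inv, Real.norm_of_nonneg hr.le, div_eq_mul_inv]

theorem isLittleO_shift_diff_cutoff_mul (s a : Fin d → ℤ) {w : (Fin d → ℤ) → ℝ}
    (hw : Tendsto w cofinite (𝓝 0)) :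
    (fun q : ℝ × (Fin d → ℤ) => (shift s (diff a (cutoff q.1)) * w) q.2) =o[atTop ×ˢ ⊤]
      fun q => q.1⁻¹ := by
  obtain ⟨C, hC0, hC⟩ := exists_abs_diff_cutoff_le a
  refine (isLittleO_inv_iff (h := fun r => shift s (diff a (cutoff r)) * w)).2 fun ε hε => ?_
  obtain ⟨k, hk⟩ := exists_forall_norm_ge_abs_le hw (ε := ε / (C + 1)) (by positivity)
  filter_upwards [eventually_gt_atTop 0, eventually_ge_atTop (k + ‖s‖ + ‖a‖)] with r hr hrk m
  rw [Pi.mul_apply, shift_apply, abs_mul]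
  rcases le_total (k : ℝ) ‖m‖ with hm | hm
  · calc |diff a (cutoff r) (m + s)| * |w m| ≤ C / r * (ε / (C + 1)) := by
          gcongr
          · exact hC r hr _
          · exact hk m hm
      _ = C / (C + 1) * (ε / r) := by ring
      _ ≤ ε / r := mul_le_of_le_one_left (by positivity)
          ((div_le_one (by positivity)).2 (le_add_of_nonneg_right zero_le_one))
  · rw [diff_cutoff_eq_zero hr (by linarith [norm_add_le m s]), abs_zero, zero_mul]
    positivity

theorem diff_cutoff_eq_zero_of_le {r : ℝ} (hr : 0 < r) {a m : Fin d → ℤ}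
    (hm : 2 * r + ‖a‖ ≤ ‖m‖) : diff a (cutoff r) m = 0 := by
  have h := norm_sub_norm_le m (-a)
  rw [norm_neg, sub_neg_eq_add] at h
  rw [diff_apply, cutoff_eq_zero hr (by linarith),
    cutoff_eq_zero hr (by linarith [norm_nonneg a]), sub_self]

theorem isLittleO_diff_diff_cutoff_mul {v : (Fin d → ℤ) → ℝ}
    (hv : ∀ e, Tendsto (diff e v) cofinite (𝓝 0)) (a b : Fin d → ℤ) :
    (fun q : ℝ × (Fin d → ℤ) => (diff a (diff b (cutoff q.1)) * v) q.2) =o[atTop ×ˢ ⊤]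
      fun q => q.1⁻¹ := by
  obtain ⟨C, hC0, hC⟩ := exists_abs_diff_diff_cutoff_le a b
  refine (isLittleO_inv_iff (h := fun r => diff a (diff b (cutoff r)) * v)).2 fun ε hε => ?_
  have hε' : 0 < ε / (4 * (C + 1)) := by positivity
  obtain ⟨B, hB⟩ := exists_abs_le_mul_norm_add hv hε'
  filter_upwards [eventually_gt_atTop 0, eventually_ge_atTop (‖a‖ + ‖b‖),
    eventually_ge_atTop (B / (ε / (4 * (C + 1))))] with r hr hrab hrB m
  rw [Pi.mul_apply, abs_mul]
  rcases le_total ‖m‖ (3 * r) with hm | hm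
  · calc |diff a (diff b (cutoff r)) m| * |v m|
        ≤ C / r ^ 2 * (ε / (4 * (C + 1)) * (3 * r) + ε / (4 * (C + 1)) * r) := by
          gcongr
          · exact hC r hr m
          · refine (hB m).trans (add_le_add ?_ ((div_le_iff₀' hε').1 hrB))
            gcongr
      _ = C / (C + 1) * (ε / r) := by
          field_simp
          ring
      _ ≤ ε / r := mul_le_of_le_one_left (by positivity)
          ((div_le_one (by positivity)).2 (le_add_of_nonneg_right zero_le_one))
  · have h := norm_sub_norm_le m (-a)
    rw [norm_neg, sub_neg_eq_add] at h
    rw [diff_apply, diff_cutoff_eq_zero_of_le hr (by linarith),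
      diff_cutoff_eq_zero_of_le hr (by linarith [norm_nonneg a]), sub_zero, abs_zero, zero_mul]
    positivity

theorem isLittleO_diff_diff_cutoff_commutator {v : (Fin d → ℤ) → ℝ}
    (hv : ∀ e, Tendsto (diff e v) cofinite (𝓝 0)) (a b : Fin d → ℤ) :
    (fun q : ℝ × (Fin d → ℤ) => (diff a (diff b (cutoff q.1 * v)) -
      cutoff q.1 * diff a (diff b v) : (Fin d → ℤ) → ℝ) q.2) =o[atTop ×ˢ ⊤]
      fun q => q.1⁻¹ := by
  refine ((((isLittleO_diff_diff_cutoff_mul hv a b).add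
    (isLittleO_shift_diff_cutoff_mul a b (hv a))).add
    (isLittleO_shift_diff_cutoff_mul b a (hv b))).add
    (isLittleO_shift_diff_cutoff_mul 0 (a + b)
      (shiftInvariant_zeroAtFilterSubmodule.diff_mem a (hv b)))).congr_left fun q => ?_
  simp only [Pi.mul_apply, Pi.sub_apply, diff_apply, shift_apply, add_zero]
  rw [add_right_comm q.2 b a, add_assoc q.2]
  ring

end Cutoff

/-! ### Lattice operators -/

theorem tsum_sum_mul_eq {β κ : Type*} (s : Finset κ) (c : κ → ℝ) {F : κ → β → ℝ}
    (hF : ∀ q, Summable (F q)) : ∑' m, ∑ q ∈ s, c q * F q m = ∑ q ∈ s, c q * ∑' m, F q m := by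
  rw [Summable.tsum_finsetSum fun q _ => (hF q).mul_left (c q)]
  simp only [tsum_mul_left]

section LatticeSystem

variable {Λ ι : Type*} [AddCommGroup Λ]

/-- The `(k, j)` entry `∑_{σ,ρ} (C_{σρ})_{kj} D_{-σ} D_ρ` of the lattice operator with interaction
matrices `C_{σρ}`. -/
def latticeOp (R : Finset Λ) (C : Λ → Λ → Matrix ι ι ℝ) (k j : ι) : Module.End ℝ (Λ → ℝ) :=
  ∑ q ∈ R ×ˢ R, C q.1 q.2 k j • (diff (-q.1) * diff q.2)

/-- The lattice operator acting on vector-valued functions, given by their components. -/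
def latticeSystem [Fintype ι] (R : Finset Λ) (C : Λ → Λ → Matrix ι ι ℝ) :
    Module.End ℝ (ι → Λ → ℝ) :=
  LinearMap.pi fun k => ∑ j, latticeOp R C k j ∘ₗ LinearMap.proj j

variable {R : Finset Λ} {C : Λ → Λ → Matrix ι ι ℝ}

theorem latticeOp_apply (k j : ι) (f : Λ → ℝ) :
    latticeOp R C k j f = ∑ q ∈ R ×ˢ R, C q.1 q.2 k j • diff (-q.1) (diff q.2 f) := by
  simp only [latticeOp, LinearMap.sum_apply, LinearMap.smul_apply, Module.End.mul_apply]

theorem latticeSystem_apply [Fintype ι] (V : ι → Λ → ℝ) (k : ι) :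
    latticeSystem R C V k = ∑ j, latticeOp R C k j (V j) := by
  simp only [latticeSystem, LinearMap.pi_apply, LinearMap.sum_apply, LinearMap.comp_apply,
    LinearMap.proj_apply]

theorem latticeOp_shift (e : Λ) (k j : ι) (f : Λ → ℝ) :
    latticeOp R C k j (shift e f) = shift e (latticeOp R C k j f) := by
  simp only [latticeOp_apply, map_sum, map_smul, shift_diff]

theorem latticeOp_iterDiff (l : List Λ) (k j : ι) (f : Λ → ℝ) :
    latticeOp R C k j (iterDiff l f) = iterDiff l (latticeOp R C k j f) := by
  simp only [latticeOp_apply, map_sum, map_smul, diff_iterDiff]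

theorem latticeSystem_shift [Fintype ι] (e : Λ) (V : ι → Λ → ℝ) (k : ι) :
    latticeSystem R C (fun j => shift e (V j)) k = shift e (latticeSystem R C V k) := by
  simp only [latticeSystem_apply, latticeOp_shift, map_sum]

theorem latticeSystem_iterDiff [Fintype ι] (l : List Λ) (V : ι → Λ → ℝ) (k : ι) :
    latticeSystem R C (fun j => iterDiff l (V j)) k = iterDiff l (latticeSystem R C V k) := by
  simp only [latticeSystem_apply, latticeOp_iterDiff, map_sum]

theorem tsum_latticeOp_mul (hC : ∀ σ ρ, (C σ ρ).transpose = C ρ σ) (k j : ι) {f : Λ → ℝ}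
    (hf : f.support.Finite) (g : Λ → ℝ) :
    ∑' m, (latticeOp R C k j f * g) m = ∑' m, (f * latticeOp R C j k g) m := by
  calc ∑' m, (latticeOp R C k j f * g) m
      = ∑' m, ∑ q ∈ R ×ˢ R, C q.1 q.2 k j * (diff (-q.1) (diff q.2 f) * g) m := by
        simp only [latticeOp_apply, Pi.mul_apply, Finset.sum_apply, Pi.smul_apply, smul_eq_mul,
          Finset.sum_mul, mul_assoc]
    _ = ∑ q ∈ R ×ˢ R, C q.1 q.2 k j * ∑' m, (diff (-q.1) (diff q.2 f) * g) m :=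
        tsum_sum_mul_eq _ _ fun q => summable_mul_of_finite_support
          (finite_support_diff _ (finite_support_diff _ hf)) g
    _ = ∑ q ∈ R ×ˢ R, C q.2 q.1 j k * ∑' m, (f * diff (-q.2) (diff q.1 g)) m := by
        refine Finset.sum_congr rfl fun q _ => ?_
        rw [tsum_diff_mul _ (finite_support_diff _ hf), tsum_diff_mul _ hf, neg_neg, ← hC q.1,
          Matrix.transpose_apply]
    _ = ∑ q ∈ R ×ˢ R, C q.1 q.2 j k * ∑' m, (f * diff (-q.1) (diff q.2 g)) m := by
        rw [Finset.sum_product, Finset.sum_comm, ← Finset.sum_product']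
    _ = ∑' m, ∑ q ∈ R ×ˢ R, C q.1 q.2 j k * (f * diff (-q.1) (diff q.2 g)) m :=
        (tsum_sum_mul_eq _ _ fun q => summable_mul_of_finite_support hf _).symm
    _ = ∑' m, (f * latticeOp R C j k g) m := by
        simp only [latticeOp_apply, Pi.mul_apply, Finset.sum_apply, Pi.smul_apply, smul_eq_mul,
          Finset.mul_sum, mul_left_comm (f _)]

theorem finite_support_latticeOp (k j : ι) {f : Λ → ℝ} (hf : f.support.Finite) :
    (latticeOp R C k j f).support.Finite := by
  rw [latticeOp_apply]
  have h : ∀ q : Λ × Λ, (C q.1 q.2 k j • diff (-q.1) (diff q.2 f)).support.Finite := fun q =>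
    (finite_support_diff _ (finite_support_diff _ hf)).subset
      (Function.support_const_smul_subset _ _)
  exact (Function.HasFiniteSupport.sum h (R ×ˢ R)).subset fun m hm => by
    simpa only [Function.mem_support, Finset.sum_apply] using hm

theorem finite_support_latticeSystem [Fintype ι] (k : ι) {V : ι → Λ → ℝ}
    (hV : ∀ j, (V j).support.Finite) : (latticeSystem R C V k).support.Finite := by
  rw [latticeSystem_apply]
  have h := Function.HasFiniteSupport.sum
    (fun j => finite_support_latticeOp (R := R) (C := C) k j (hV j)) Finset.univ
  exact h.subset fun m hm => by simpa only [Function.mem_support, Finset.sum_apply] using hm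

variable [DecidableEq Λ] [Fintype ι] [DecidableEq ι] {G : ι → ι → Λ → ℝ}

/-- `G j k` is the `j`-th component of the `k`-th column of a fundamental solution. -/
def IsFundamentalSolution (L : Module.End ℝ (ι → Λ → ℝ)) (G : ι → ι → Λ → ℝ) : Prop :=
  ∀ k, L (fun j => G j k) = Pi.single k (Pi.single 0 1)

theorem IsFundamentalSolution.eq_sum_tsum
    (hG : IsFundamentalSolution (latticeSystem R C) G) (hC : ∀ σ ρ, (C σ ρ).transpose = C ρ σ)
    {V : ι → Λ → ℝ} (hV : ∀ j, (V j).support.Finite) (k : ι) (x : Λ) :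
    V k x = ∑ j, ∑' m, latticeSystem R C V j m * G j k (m - x) := by
  have hsource : ∀ i, latticeSystem R C (fun j => shift (-x) (G j k)) i =
      shift (-x) (Pi.single (M := fun _ => Λ → ℝ) k (Pi.single 0 1) i) := fun i => by
    rw [latticeSystem_shift, hG k]
  have hpoint : ∑ i, ∑' m, (V i * shift (-x)
      (Pi.single (M := fun _ => Λ → ℝ) k (Pi.single 0 1) i)) m = V k x := by
    rw [Finset.sum_eq_single k, Pi.single_eq_same, tsum_eq_single x]
    · simp
    · intro m hm
      simp [← sub_eq_add_neg, sub_eq_zero, hm]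
    · intro i _ hi
      simp [hi]
    · simp
  have hsum : ∀ i j, Summable (latticeOp R C j i (V i) * shift (-x) (G j k)) := fun i j =>
    summable_mul_of_finite_support (finite_support_latticeOp j i (hV i)) _
  calc V k x = ∑ i, ∑' m, (V i * latticeSystem R C (fun j => shift (-x) (G j k)) i) m := by
        rw [← hpoint]
        simp only [hsource]
    _ = ∑ i, ∑ j, ∑' m, (V i * latticeOp R C i j (shift (-x) (G j k))) m := by
        refine Finset.sum_congr rfl fun i _ => ?_
        rw [latticeSystem_apply, ← Summable.tsum_finsetSum fun j _ =>
          summable_mul_of_finite_support (hV i) _]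
        simp only [Pi.mul_apply, Finset.sum_apply, Finset.mul_sum]
    _ = ∑ j, ∑ i, ∑' m, (latticeOp R C j i (V i) * shift (-x) (G j k)) m := by
        rw [Finset.sum_comm]
        simp only [tsum_latticeOp_mul hC _ _ (hV _)]
    _ = _ := by
        refine Finset.sum_congr rfl fun j _ => ?_
        rw [← Summable.tsum_finsetSum fun i _ => hsum i j]
        simp only [latticeSystem_apply, Pi.mul_apply, Finset.sum_apply, Finset.sum_mul, shift_apply,
          sub_eq_add_neg]

end LatticeSystem

/-! ### The Green representation -/

section GreenRepresentation

variable {d n : ℕ}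

theorem sum_inv_bracket_sub_pow_le {F : Finset (Fin d → ℤ)} {x : Fin d → ℤ} {r : ℝ}
    (hn : n + 1 = d) (hx : bracket x ≤ r) (hF : ∀ m ∈ F, ‖m‖ ≤ 3 * r) :
    ∑ m ∈ F, (bracket (x - m) ^ n)⁻¹ ≤ 6 ^ d * 2 * (4 * r) := by
  have hx2 := two_le_bracket x
  rw [← Finset.sum_image (f := fun y => (bracket y ^ n)⁻¹) (sub_right_injective (b := x)).injOn]
  refine sum_inv_bracket_pow_le_linear (by linarith) hn fun y hy => ?_
  obtain ⟨m, hm, rfl⟩ := Finset.mem_image.1 hy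
  have := hF m hm
  have := norm_sub_le x m
  unfold bracket at *
  linarith

/-- Only `|y|^{1-d}` decay of the kernel is needed: over a ball of radius `r` its sum is `O(r)`,
which the `o(1/r)` factor compensates. -/
theorem tendsto_tsum_mul_of_isLittleO (hn : n + 1 = d) {Φ : (Fin d → ℤ) → ℝ}
    (hΦ : Φ ∈ decay (Fin d → ℤ) n 0) {h : ℝ → (Fin d → ℤ) → ℝ}
    (ho : (fun q : ℝ × (Fin d → ℤ) => h q.1 q.2) =o[atTop ×ˢ ⊤] fun q => q.1⁻¹)
    (hsupp : ∀ᶠ r in atTop, ∀ m, 3 * r ≤ ‖m‖ → h r m = 0) (x : Fin d → ℤ) :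
    Tendsto (fun r => ∑' m, Φ (x - m) * h r m) atTop (𝓝 0) := by
  obtain ⟨B, hB0, hB⟩ := exists_bound_of_mem_decay hΦ
  rw [Metric.tendsto_atTop']
  have hC : 0 ≤ B * (6 ^ d * 2 * 4) := by positivity
  set C := B * (6 ^ d * 2 * 4) with hCdef
  intro ε hε
  have hev : ∀ᶠ r : ℝ in atTop, |∑' m, Φ (x - m) * h r m| < ε := by
    filter_upwards [hsupp, isLittleO_inv_iff.1 ho (ε / (C + 1)) (by positivity),
      eventually_ge_atTop (bracket x)] with r hsupp hle hr
    have hr0 : 0 < r := (bracket_pos x).trans_le hr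
    set F := ((isCompact_closedBall (0 : Fin d → ℤ) (3 * r)).finite_of_discrete).toFinset
    have hF : ∀ m, m ∈ F ↔ ‖m‖ ≤ 3 * r := fun m => by
      rw [Set.Finite.mem_toFinset, mem_closedBall_zero_iff]
    rw [tsum_eq_sum (s := F) fun m hm => by
      rw [hsupp m (not_le.1 fun hm' => hm ((hF m).2 hm')).le, mul_zero]]
    calc |∑ m ∈ F, Φ (x - m) * h r m|
        ≤ ∑ m ∈ F, B * (ε / (C + 1) / r) * (bracket (x - m) ^ n)⁻¹ := by
          refine (Finset.abs_sum_le_sum_abs _ _).trans (Finset.sum_le_sum fun m _ => ?_)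
          rw [abs_mul, mul_right_comm]
          refine mul_le_mul ((hB _).trans_eq ?_) (hle m) (abs_nonneg _) ?_
          · rw [decayRate, pow_zero, one_div]
          · have := bracket_pos (x - m)
            positivity
      _ ≤ B * (ε / (C + 1) / r) * (6 ^ d * 2 * (4 * r)) := by
          rw [← Finset.mul_sum]
          exact mul_le_mul_of_nonneg_left
            (sum_inv_bracket_sub_pow_le hn hr fun m hm => (hF m).1 hm) (by positivity)
      _ = C / (C + 1) * ε := by
          rw [hCdef]
          field_simp
      _ < ε := mul_lt_of_lt_one_left hε ((div_lt_one (by positivity)).2 (lt_add_one C))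
  obtain ⟨r₀, hr₀⟩ := eventually_atTop.1 hev
  exact ⟨r₀, fun r hr => by simpa [Real.dist_eq] using hr₀ r hr.le⟩

variable {ι : Type*} [Fintype ι] {R : Finset (Fin d → ℤ)}
  {C : (Fin d → ℤ) → (Fin d → ℤ) → Matrix ι ι ℝ}

variable (R C) in
/-- The `k`-th component of the commutator of the lattice operator with multiplication by the
cutoff at scale `r`, applied to `V`. -/
def cutoffCommutator (r : ℝ) (V : ι → (Fin d → ℤ) → ℝ) (k : ι) : (Fin d → ℤ) → ℝ :=
  latticeSystem R C (fun j => cutoff r * V j) k - cutoff r * latticeSystem R C V k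

theorem cutoffCommutator_eq_sum (r : ℝ) (V : ι → (Fin d → ℤ) → ℝ) (k : ι) :
    cutoffCommutator R C r V k =
      ∑ j, ∑ q ∈ R ×ˢ R, C q.1 q.2 k j • (diff (-q.1) (diff q.2 (cutoff r * V j)) -
        cutoff r * diff (-q.1) (diff q.2 (V j))) := by
  simp only [cutoffCommutator, latticeSystem_apply, latticeOp_apply, Finset.mul_sum,
    ← Finset.sum_sub_distrib, mul_smul_comm, smul_sub]

theorem isLittleO_cutoffCommutator {V : ι → (Fin d → ℤ) → ℝ}
    (hV : ∀ j e, Tendsto (diff e (V j)) cofinite (𝓝 0)) (k : ι) :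
    (fun q : ℝ × (Fin d → ℤ) => cutoffCommutator R C q.1 V k q.2) =o[atTop ×ˢ ⊤]
      fun q => q.1⁻¹ := by
  simp only [cutoffCommutator_eq_sum, Finset.sum_apply, Pi.smul_apply, smul_eq_mul]
  refine Asymptotics.IsLittleO.fun_sum fun j _ => ?_
  refine Asymptotics.IsLittleO.fun_sum fun q _ => ?_
  exact (isLittleO_diff_diff_cutoff_commutator (hV j) (-q.1) q.2).const_mul_left _

theorem eventually_cutoffCommutator_eq_zero (V : ι → (Fin d → ℤ) → ℝ) (k : ι) :
    ∀ᶠ r in atTop, ∀ m, 3 * r ≤ ‖m‖ → cutoffCommutator R C r V k m = 0 := by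
  have hR : ∀ᶠ r : ℝ in atTop, ∀ q : (Fin d → ℤ) × (Fin d → ℤ), q ∈ R ×ˢ R →
      ‖q.1‖ + ‖q.2‖ ≤ r :=
    (Finset.eventually_all _).2 fun _ _ => eventually_ge_atTop _
  filter_upwards [hR, eventually_gt_atTop 0] with r hr hr0 m hm
  rw [cutoffCommutator_eq_sum, Finset.sum_apply]
  refine Finset.sum_eq_zero fun j _ => ?_
  rw [Finset.sum_apply]
  refine Finset.sum_eq_zero fun q hq => ?_
  have hq := hr q hq
  have hzero : ∀ a : Fin d → ℤ, ‖a‖ ≤ r → cutoff r (m + a) = 0 := fun a ha =>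
    cutoff_eq_zero hr0 (by linarith [norm_sub_le_norm_add m a])
  have h1 := norm_nonneg q.1
  have h2 := norm_nonneg q.2
  have h12 := norm_add_le (-q.1) q.2
  rw [norm_neg] at h12
  have h0 : cutoff r m = 0 := by simpa using hzero 0 (by simpa using hr0.le)
  simp only [Pi.smul_apply, Pi.sub_apply, Pi.mul_apply, diff_apply, add_assoc, h0,
    hzero _ (h12.trans hq), hzero (-q.1) (by rw [norm_neg]; linarith), hzero q.2 (by linarith)]
  simp

theorem tendsto_tsum_mul_cutoff_mul {f g : (Fin d → ℤ) → ℝ} (h : Summable fun m => f m * g m) :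
    Tendsto (fun r => ∑' m, f m * (cutoff r m * g m)) atTop (𝓝 (∑' m, f m * g m)) := by
  refine tendsto_tsum_of_dominated_convergence h.norm (fun m => ?_)
    (Eventually.of_forall fun r m => ?_)
  · refine tendsto_const_nhds.congr' ?_
    filter_upwards [eventually_gt_atTop 0, eventually_ge_atTop ‖m‖] with r hr hm
    rw [cutoff_eq_one hr hm, one_mul]
  · rw [mul_left_comm, norm_mul]
    exact mul_le_of_le_one_left (norm_nonneg _) (abs_cutoff_le_one r m)

variable [DecidableEq ι] {p α : ℕ} {G : ι → ι → (Fin d → ℤ) → ℝ} {V : ι → (Fin d → ℤ) → ℝ}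

namespace IsFundamentalSolution

theorem diff_eq_sum_tsum (hG : IsFundamentalSolution (latticeSystem R C) G)
    (hC : ∀ σ ρ, (C σ ρ).transpose = C ρ σ) (hV : ∀ j, (V j).support.Finite) (e : Fin d → ℤ)
    (k : ι) (x : Fin d → ℤ) :
    diff e (V k) x = ∑ j, ∑' m, diff (-e) (G j k) (-(x - m)) * latticeSystem R C V j m := by
  have hsum : ∀ j y, Summable fun m => latticeSystem R C V j m * G j k (m - y) := fun j y =>
    summable_mul_of_finite_support (finite_support_latticeSystem j hV) _
  rw [diff_apply, hG.eq_sum_tsum hC hV, hG.eq_sum_tsum hC hV, ← Finset.sum_sub_distrib]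
  refine Finset.sum_congr rfl fun j _ => ?_
  rw [← (hsum j _).tsum_sub (hsum j _)]
  refine tsum_congr fun m => ?_
  rw [diff_apply, neg_sub, sub_add_eq_sub_sub, ← sub_eq_add_neg]
  ring

theorem diff_eq_sum_tsum_cutoff (hG : IsFundamentalSolution (latticeSystem R C) G)
    (hC : ∀ σ ρ, (C σ ρ).transpose = C ρ σ) (V : ι → (Fin d → ℤ) → ℝ) {e x : Fin d → ℤ} {r : ℝ}
    (hr : 0 < r) (hxr : ‖x‖ + ‖e‖ ≤ r) (k : ι) :
    diff e (V k) x = ∑ j,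
      (∑' m, diff (-e) (G j k) (-(x - m)) * (cutoff r m * latticeSystem R C V j m) +
        ∑' m, diff (-e) (G j k) (-(x - m)) * cutoffCommutator R C r V j m) := by
  have hfin : ∀ f : (Fin d → ℤ) → ℝ, (cutoff r * f).support.Finite := fun f =>
    (finite_support_cutoff hr).subset (Function.support_mul_subset_left _ _)
  have hV : diff e (V k) x = diff e (cutoff r * V k) x := by
    rw [diff_apply, diff_apply, Pi.mul_apply, Pi.mul_apply,
      cutoff_eq_one hr ((norm_add_le _ _).trans hxr),
      cutoff_eq_one hr ((le_add_of_nonneg_right (norm_nonneg e)).trans hxr), one_mul, one_mul]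
  rw [hV, hG.diff_eq_sum_tsum hC fun j => hfin (V j)]
  refine Finset.sum_congr rfl fun j _ => ?_
  have hcut := summable_mul_of_finite_support (hfin (latticeSystem R C V j)) fun m =>
    diff (-e) (G j k) (-(x - m))
  have hsum := summable_mul_of_finite_support
    (finite_support_latticeSystem (R := R) (C := C) j fun j => hfin (V j)) fun m =>
    diff (-e) (G j k) (-(x - m))
  rw [← sub_eq_iff_eq_add', ← (hsum.congr ?_).tsum_sub (hcut.congr ?_)]
  · exact tsum_congr fun m => (mul_sub _ _ _).symm
  · exact fun m => mul_comm _ _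
  · exact fun m => mul_comm _ _

/-- Cut `V` off at scale `r`, apply the finitely supported case, and let `r → ∞`. -/
theorem diff_eq_sum_tsum_of_tendsto (hG : IsFundamentalSolution (latticeSystem R C) G)
    (hC : ∀ σ ρ, (C σ ρ).transpose = C ρ σ) (hn : n + 1 = d) (hn1 : 1 ≤ n)
    (hGdecay : ∀ e j k, diff e (G j k) ∈ decay (Fin d → ℤ) n 0)
    (hV : ∀ j e, Tendsto (diff e (V j)) cofinite (𝓝 0))
    (hHV : ∀ j, latticeSystem R C V j ∈ decay (Fin d → ℤ) (d + p) α) (e : Fin d → ℤ) (k : ι)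
    (x : Fin d → ℤ) :
    diff e (V k) x = ∑ j, ∑' m, diff (-e) (G j k) (-(x - m)) * latticeSystem R C V j m := by
  have hΦ : ∀ j, (fun y => diff (-e) (G j k) (-y)) ∈ decay (Fin d → ℤ) n 0 := fun j =>
    comp_neg_mem_decay (hGdecay _ _ _)
  have hcut := ((eventually_gt_atTop (0 : ℝ)).and (eventually_ge_atTop (‖x‖ + ‖e‖))).mono
    fun r hr => hG.diff_eq_sum_tsum_cutoff hC V hr.1 hr.2 k
  have hlim := tendsto_finsetSum Finset.univ fun j _ =>
    (tendsto_tsum_mul_cutoff_mul (summable_kernel_mul hn1 (hΦ j) (hHV j) x)).add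
      (tendsto_tsum_mul_of_isLittleO hn (hΦ j) (isLittleO_cutoffCommutator (R := R) (C := C) hV j)
        (eventually_cutoffCommutator_eq_zero V j) x)
  simpa only [add_zero] using tendsto_nhds_unique (tendsto_const_nhds.congr' hcut) hlim

end IsFundamentalSolution

end GreenRepresentation

/-! ### Multipole expansion on the integer lattice -/

section IntegerLattice

theorem IsDecayingKernel.comp_neg {Λ : Type*} [SeminormedAddCommGroup Λ] {e : ℕ} {Φ : Λ → ℝ}
    (hΦ : IsDecayingKernel e Φ) : IsDecayingKernel e fun y => Φ (-y) := by
  intro l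
  have h := iterDiff_comp_const_sub l 0 Φ
  simp only [zero_sub] at h
  rw [h]
  simpa only [List.length_map] using comp_neg_mem_decay (hΦ (l.map Neg.neg))

variable {d n p α : ℕ} {ι : Type*} [Fintype ι] {R : Finset (Fin d → ℤ)}
  {C : (Fin d → ℤ) → (Fin d → ℤ) → Matrix ι ι ℝ} {G : ι → ι → (Fin d → ℤ) → ℝ}
  {V : ι → (Fin d → ℤ) → ℝ}

/-- `V` minus the multipole fields of order `< p` built from the columns of `G` with
coefficients `b`. -/
def multipoleRemainder (p : ℕ) (b : (i : ℕ) → ι → (Fin i → Fin d) → ℝ)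
    (G : ι → ι → (Fin d → ℤ) → ℝ) (V : ι → (Fin d → ℤ) → ℝ) : ι → (Fin d → ℤ) → ℝ :=
  V - ∑ i ∈ Finset.range p, ∑ k, ∑ σ, b i k σ •
    fun j => iterDiff ((List.ofFn σ).map basisVec) (G j k)

theorem tendsto_diff_multipoleRemainder (hn : n ≠ 0)
    (hGdecay : ∀ e j k, IsDecayingKernel n (diff e (G j k)))
    (hV : ∀ j e, Tendsto (diff e (V j)) cofinite (𝓝 0))
    (b : (i : ℕ) → ι → (Fin i → Fin d) → ℝ) (j : ι) (e : Fin d → ℤ) :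
    Tendsto (diff e (multipoleRemainder p b G V j)) cofinite (𝓝 0) := by
  have hpole : diff e (∑ i ∈ Finset.range p, ∑ k, ∑ σ : Fin i → Fin d, b i k σ •
      iterDiff ((List.ofFn σ).map basisVec) (G j k)) ∈ decay (Fin d → ℤ) n 0 := by
    simp only [map_sum, map_smul, diff_iterDiff]
    exact Submodule.sum_mem _ fun i _ => Submodule.sum_mem _ fun k _ => Submodule.sum_mem _
      fun σ _ => Submodule.smul_mem _ _ (decay_anti_left (Nat.le_add_right _ _) _
        (hGdecay e j k _))
  have h := (hV j e).sub (tendsto_zero_of_mem_decay hn hpole)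
  rw [sub_zero] at h
  convert h using 1
  simp only [multipoleRemainder, Pi.sub_apply, Finset.sum_apply, Pi.smul_apply, map_sub]
  rfl

variable [DecidableEq ι]

namespace IsFundamentalSolution

theorem diff_mem_decay (hG : IsFundamentalSolution (latticeSystem R C) G)
    (hC : ∀ σ ρ, (C σ ρ).transpose = C ρ σ) (hn : n + 1 = d) (hn1 : 1 ≤ n)
    (hGdecay : ∀ e j k, IsDecayingKernel n (diff e (G j k)))
    (hV : ∀ j e, Tendsto (diff e (V j)) cofinite (𝓝 0))
    (hHV : ∀ j, latticeSystem R C V j ∈ decay (Fin d → ℤ) (d + p) α)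
    (hmom : ∀ j, HasVanishingMoments p (latticeSystem R C V j)) (e : Fin d → ℤ) (k : ι) :
    diff e (V k) ∈ decay (Fin d → ℤ) (n + p) (α + 1) := by
  have hrep : diff e (V k) = ∑ j, fun x =>
      ∑' m, diff (-e) (G j k) (-(x - m)) * latticeSystem R C V j m := funext fun x => by
    rw [Finset.sum_apply]
    exact hG.diff_eq_sum_tsum_of_tendsto hC hn hn1
      (fun e j k => (hGdecay e j k).self_mem_decay) hV hHV e k x
  rw [hrep]
  exact Submodule.sum_mem _ fun j _ =>
    (hGdecay (-e) j k).comp_neg.tsum_mul_mem_decay hn1 (by omega) (hHV j) (hmom j)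

theorem diff_diff_mem_decay (hG : IsFundamentalSolution (latticeSystem R C) G)
    (hC : ∀ σ ρ, (C σ ρ).transpose = C ρ σ) (hn : n + 1 = d) (hn1 : 1 ≤ n)
    (hGdecay : ∀ e j k, IsDecayingKernel n (diff e (G j k)))
    (hV : ∀ j e, Tendsto (diff e (V j)) cofinite (𝓝 0))
    (hHV : ∀ j, latticeSystem R C V j ∈ decay (Fin d → ℤ) (d + p) α)
    (hmom : ∀ j, HasVanishingMoments p (latticeSystem R C V j)) (a e : Fin d → ℤ) (k : ι) :
    diff a (diff e (V k)) ∈ decay (Fin d → ℤ) (d + p) (α + 1) := by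
  have hΦ := fun j => (hGdecay (-e) j k).comp_neg
  have hsum := fun j y => summable_kernel_mul hn1 (hΦ j).self_mem_decay (hHV j) y
  have hrep : diff a (diff e (V k)) = ∑ j, fun x =>
      ∑' m, diff a (fun y => diff (-e) (G j k) (-y)) (x - m) * latticeSystem R C V j m := by
    funext x
    have hx := hG.diff_eq_sum_tsum_of_tendsto hC hn hn1
      (fun e j k => (hGdecay e j k).self_mem_decay) hV hHV e k
    rw [diff_apply, hx, hx, ← Finset.sum_sub_distrib, Finset.sum_apply]
    refine Finset.sum_congr rfl fun j _ => ?_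
    rw [← (hsum j _).tsum_sub (hsum j _)]
    refine tsum_congr fun m => ?_
    rw [diff_apply _ (fun y => diff (-e) (G j k) (-y)), sub_mul, add_sub_right_comm]
  have hn2 : n + 1 + p = d + p := by rw [hn]
  rw [hrep, ← hn2]
  exact Submodule.sum_mem _ fun j _ =>
    ((hΦ j).diff a).tsum_mul_mem_decay (by omega) (by omega) (hHV j) (hmom j)

/-- `V` with `l` applied solves the same problem with `p + l.length` in place of `p`, because
differences create moments. -/
theorem iterDiff_diff_diff_mem_decay (hG : IsFundamentalSolution (latticeSystem R C) G)
    (hC : ∀ σ ρ, (C σ ρ).transpose = C ρ σ) (hn : n + 1 = d) (hn1 : 1 ≤ n)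
    (hGdecay : ∀ e j k, IsDecayingKernel n (diff e (G j k)))
    (hV : ∀ j e, Tendsto (diff e (V j)) cofinite (𝓝 0))
    (hmom : ∀ j, HasVanishingMoments p (latticeSystem R C V j)) (l : List (Fin d → ℤ))
    (hHV : ∀ j l', l'.length ≤ l.length →
      iterDiff l' (latticeSystem R C V j) ∈ decay (Fin d → ℤ) (d + p + l'.length) α)
    (a e : Fin d → ℤ) (k : ι) :
    iterDiff l (diff a (diff e (V k))) ∈ decay (Fin d → ℤ) (d + p + l.length) (α + 1) := by
  rw [← diff_iterDiff, ← diff_iterDiff, add_assoc]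
  simp only [add_assoc] at hHV
  refine hG.diff_diff_mem_decay (V := fun j => iterDiff l (V j)) hC hn hn1 hGdecay
    (fun j e => ?_) (fun j => ?_) (fun j => ?_) a e k
  · rw [diff_iterDiff]
    exact shiftInvariant_zeroAtFilterSubmodule.iterDiff_mem l (hV j e)
  · rw [latticeSystem_iterDiff]
    exact hHV j l le_rfl
  · rw [latticeSystem_iterDiff]
    exact hasVanishingMoments_iterDiff (by omega) (hmom j) (hHV j)

end IsFundamentalSolution

theorem latticeSystem_multipoleRemainder (hG : IsFundamentalSolution (latticeSystem R C) G)
    (b : (i : ℕ) → ι → (Fin i → Fin d) → ℝ) (V : ι → (Fin d → ℤ) → ℝ) (j : ι) :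
    latticeSystem R C (multipoleRemainder p b G V) j = latticeSystem R C V j -
      ∑ i ∈ Finset.range p, ∑ σ, b i j σ • multipoleSource σ := by
  have hterm : ∀ (i : ℕ) (σ : Fin i → Fin d) (k : ι),
      latticeSystem R C (fun j => iterDiff ((List.ofFn σ).map basisVec) (G j k)) =
        Pi.single k (multipoleSource σ) := fun i σ k => by
    funext m
    rw [latticeSystem_iterDiff, hG k]
    obtain rfl | hm := eq_or_ne m k
    · rw [Pi.single_eq_same, Pi.single_eq_same, multipoleSource]
    · rw [Pi.single_eq_of_ne hm, Pi.single_eq_of_ne hm, map_zero]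
  simp only [multipoleRemainder, map_sub, map_sum, map_smul, hterm, Pi.sub_apply,
    Finset.sum_apply, Pi.smul_apply]
  congr 1
  refine Finset.sum_congr rfl fun i _ => ?_
  rw [Finset.sum_comm]
  refine Finset.sum_congr rfl fun σ _ => ?_
  rw [Finset.sum_eq_single j (fun k _ hk => by rw [Pi.single_eq_of_ne hk.symm, smul_zero])
    (by simp), Pi.single_eq_same]

theorem IsFundamentalSolution.exists_multipoleRemainder_mem_decay
    (hG : IsFundamentalSolution (latticeSystem R C) G)
    (hC : ∀ σ ρ, (C σ ρ).transpose = C ρ σ) (hn : n + 1 = d) (hn1 : 1 ≤ n)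
    (hGdecay : ∀ e j k, IsDecayingKernel n (diff e (G j k)))
    (hV : ∀ j e, Tendsto (diff e (V j)) cofinite (𝓝 0))
    (hHV : ∀ j, latticeSystem R C V j ∈ decay (Fin d → ℤ) (d + p) α) :
    ∃ b : (i : ℕ) → ι → (Fin i → Fin d) → ℝ,
      (∀ i k (π : Equiv.Perm (Fin i)) σ, b i k (σ ∘ π) = b i k σ) ∧
      ∀ l : List (Fin d → ℤ), l ≠ [] → (∀ j l', l'.length ≤ l.length - 2 →
          iterDiff l' (latticeSystem R C V j) ∈ decay (Fin d → ℤ) (d + p + l'.length) α) →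
        ∀ k, iterDiff l (multipoleRemainder p b G V k) ∈
          decay (Fin d → ℤ) (n + p + (l.length - 1)) (α + 1) := by
  choose b hsymm hmom using fun j => exists_multipole_coeffs (hHV j)
  set W := multipoleRemainder p (fun i k => b k i) G V
  have hW : ∀ j e, Tendsto (diff e (W j)) cofinite (𝓝 0) :=
    tendsto_diff_multipoleRemainder (by omega) hGdecay hV _
  have hHW : ∀ j, latticeSystem R C W j = latticeSystem R C V j -
      ∑ i ∈ Finset.range p, ∑ σ, b j i σ • multipoleSource σ :=
    latticeSystem_multipoleRemainder hG _ V
  have hmomW : ∀ j, HasVanishingMoments p (latticeSystem R C W j) := fun j => by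
    rw [hHW]
    exact hmom j
  have hdecayW : ∀ j m l, iterDiff l (latticeSystem R C V j) ∈ decay (Fin d → ℤ) m α →
      iterDiff l (latticeSystem R C W j) ∈ decay (Fin d → ℤ) m α := by
    intro j m l h
    rw [hHW]
    simp only [map_sub, map_sum, map_smul]
    exact Submodule.sub_mem _ h (Submodule.sum_mem _ fun i _ => Submodule.sum_mem _ fun σ _ =>
      Submodule.smul_mem _ _ (mem_decay_of_finite_support _ _
        (finite_support_iterDiff _ (finite_support_multipoleSource σ))))
  refine ⟨fun i k => b k i, fun i k => hsymm k i, fun l hl hDHV k => ?_⟩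
  rcases l with _ | ⟨e, _ | ⟨a, l⟩⟩
  · exact absurd rfl hl
  · exact hG.diff_mem_decay hC hn hn1 hGdecay hW (fun j => hdecayW j _ [] (hHV j)) hmomW e k
  · rw [iterDiff_cons, iterDiff_cons, diff_iterDiff, diff_iterDiff]
    have hexp : n + p + ((e :: a :: l).length - 1) = d + p + l.length := by
      simp only [List.length_cons]
      omega
    rw [hexp]
    exact hG.iterDiff_diff_diff_mem_decay hC hn hn1 hGdecay hW hmomW l
      (fun j l' hl' => hdecayW j _ l' (hDHV j l' hl')) e a k

end IntegerLattice

/-! ### From Bravais lattices to the integer lattice -/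

section EuclideanNorm

theorem sqrt_sum_sq_le_sum {ι : Type*} (t : Finset ι) {f : ι → ℝ} (hf : ∀ i, 0 ≤ f i) :
    √(∑ i ∈ t, f i ^ 2) ≤ ∑ i ∈ t, f i :=
  (Real.sqrt_le_left (Finset.sum_nonneg fun i _ => hf i)).2
    (Finset.sum_sq_le_sq_sum_of_nonneg fun i _ => hf i)

theorem le_sqrt_sum_sq {ι : Type*} {t : Finset ι} (f : ι → ℝ) {i : ι} (hi : i ∈ t) :
    f i ≤ √(∑ j ∈ t, f j ^ 2) :=
  Real.le_sqrt_of_sq_le (Finset.single_le_sum (f := fun j => f j ^ 2) (fun _ _ => sq_nonneg _) hi)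

variable {n : ℕ} (v : Vec n)

theorem enorm_eq_norm_toLp : enorm v = ‖WithLp.toLp 2 v‖ := by
  simp only [enorm, EuclideanSpace.norm_eq, Real.norm_eq_abs, sq_abs]

theorem enorm_nonneg : 0 ≤ enorm v := Real.sqrt_nonneg _

theorem abs_apply_le_enorm (i : Fin n) : |v i| ≤ enorm v := by
  simpa only [enorm, sq_abs] using le_sqrt_sum_sq (fun i => |v i|) (Finset.mem_univ i)

theorem enorm_le_sum_abs : enorm v ≤ ∑ i, |v i| := by
  simpa only [enorm, sq_abs] using sqrt_sum_sq_le_sum Finset.univ fun i => abs_nonneg (v i)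

theorem two_le_ang : 2 ≤ ang v := le_add_of_nonneg_left (enorm_nonneg v)

end EuclideanNorm

section Pullback

variable {Λ : Type*} [AddCommGroup Λ] {d N : ℕ} (φ : Λ →+ Vec d)

/-- The components of a vector field on `ℝ^d`, read off along a parametrization of a lattice. -/
def pullback (u : Vec d → Vec N) : Fin N → Λ → ℝ := fun i z => u (φ z) i

theorem sum_finset_fin_succ {M : Type*} [AddCommMonoid M] {j : ℕ} (F : Finset (Fin (j + 1)) → M) :
    ∑ S, F S = ∑ S : Finset (Fin j), F (S.map (Fin.succEmb j)) +
      ∑ S : Finset (Fin j), F (insert 0 (S.map (Fin.succEmb j))) := by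
  have h0 : (0 : Fin (j + 1)) ∉ Finset.univ.map (Fin.succEmb j) := by simp
  have huniv : (Finset.univ : Finset (Finset (Fin (j + 1)))) =
      (insert 0 (Finset.univ.map (Fin.succEmb j))).powerset := by
    rw [← Finset.powerset_univ, Fin.univ_succ, Finset.cons_eq_insert]
    rfl
  have hmap : (Finset.univ.map (Fin.succEmb j)).powerset =
      Finset.univ.map (Finset.mapEmbedding (Fin.succEmb j)).toEmbedding := by
    ext S
    simp [Finset.subset_map_iff, eq_comm]
  rw [huniv, Finset.sum_powerset_insert h0, hmap, Finset.sum_map, Finset.sum_map]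
  rfl

theorem iterDiff_ofFn {j : ℕ} (τ : Fin j → Λ) (f : Λ → ℝ) (x : Λ) :
    iterDiff (List.ofFn τ) f x =
      ∑ S : Finset (Fin j), (-1 : ℝ) ^ (j - S.card) * f (x + ∑ i ∈ S, τ i) := by
  induction j generalizing x with
  | zero => simp [Finset.univ_unique, Finset.eq_empty_of_isEmpty]
  | succ j ih =>
    rw [List.ofFn_succ, iterDiff_cons, diff_apply, ih, ih, sum_finset_fin_succ, sub_eq_neg_add,
      ← Finset.sum_neg_distrib]
    congr 1 <;> refine Finset.sum_congr rfl fun S _ => ?_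
    · have hcard : S.card ≤ j := by simpa using S.card_le_univ
      rw [Finset.card_map, Finset.sum_map, Nat.sub_add_comm hcard, pow_succ, mul_neg_one, neg_mul]
      rfl
    · have h0 : (0 : Fin (j + 1)) ∉ S.map (Fin.succEmb j) := by simp
      rw [Finset.card_insert_of_notMem h0, Finset.card_map, Finset.sum_insert h0, Finset.sum_map,
        Nat.add_sub_add_right, add_assoc]
      rfl

theorem Dmulti_map {j : ℕ} (τ : Fin j → Λ) (u : Vec d → Vec N) (z : Λ) (i : Fin N) :
    Dmulti (fun m => φ (τ m)) u (φ z) i = iterDiff (List.ofFn τ) (pullback φ u i) z := by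
  simp only [iterDiff_ofFn, Dmulti, pullback, Finset.sum_apply, Pi.smul_apply, smul_eq_mul,
    map_add, map_sum]

theorem D1_map (e : Λ) (u : Vec d → Vec N) (z : Λ) (i : Fin N) :
    D1 (φ e) u (φ z) i = diff e (pullback φ u i) z := by
  simp only [D1, diff_apply, pullback, map_add, Pi.sub_apply]

variable {φ} {R : Finset (Vec d)}

theorem pullback_Hop (hφ : Function.Injective φ) (hR : ∀ ρ ∈ R, ρ ∈ Set.range φ)
    (C : Vec d → Vec d → Fin N → Fin N → ℝ) (u : Vec d → Vec N) :
    pullback φ (Hop d N R C u) = latticeSystem (R.preimage φ hφ.injOn)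
      (fun σ ρ => Matrix.of (C (φ σ) (φ ρ))) (pullback φ u) := by
  have hsum : ∀ F : Vec d → ℝ, ∑ ρ ∈ R, F ρ = ∑ z ∈ R.preimage φ hφ.injOn, F (φ z) := fun F =>
    (Finset.sum_preimage φ R hφ.injOn F fun ρ hρ h => absurd (hR ρ hρ) h).symm
  funext k z
  calc pullback φ (Hop d N R C u) k z
      = ∑ σ ∈ R.preimage φ hφ.injOn, ∑ ρ ∈ R.preimage φ hφ.injOn, ∑ j,
          C (φ σ) (φ ρ) k j * diff (-σ) (diff ρ (pullback φ u j)) z := by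
        simp only [pullback, Hop, Finset.sum_apply, Pi.sub_apply, hsum, mulV,
          ← Finset.sum_sub_distrib, ← mul_sub, diff_apply, D1, map_add, map_sub, ← sub_eq_add_neg]
    _ = _ := by
        simp only [latticeSystem_apply, latticeOp_apply, Finset.sum_apply, Pi.smul_apply,
          smul_eq_mul, Matrix.of_apply, Finset.sum_product]
        exact (Finset.sum_congr rfl fun σ _ => Finset.sum_comm).trans Finset.sum_comm

theorem closure_preimage_eq_top (hφ : Function.Injective φ) (hR : ∀ ρ ∈ R, ρ ∈ Set.range φ)
    (hspan : ∀ z, ∃ c : Vec d → ℤ, φ z = ∑ ρ ∈ R, (c ρ : ℝ) • ρ) :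
    AddSubgroup.closure (φ ⁻¹' R) = ⊤ := by
  refine eq_top_iff.2 fun x _ => ?_
  obtain ⟨c, hc⟩ := hspan x
  choose τ hτ using hR
  have hx : x = ∑ ρ ∈ R.attach, c ρ • τ ρ ρ.2 := by
    refine hφ (hc.trans ?_)
    simp only [map_sum, map_zsmul, hτ, Int.cast_smul_eq_zsmul]
    exact (Finset.sum_attach R fun ρ => c ρ • ρ).symm
  rw [hx]
  refine AddSubgroup.sum_mem _ fun ρ _ => AddSubgroup.zsmul_mem _ (AddSubgroup.subset_closure ?_) _
  simp only [Set.mem_preimage, hτ, SetLike.mem_coe, ρ.2]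

theorem enorm_Dmulti_le_DnormJ (u : Vec d → Vec N) {j : ℕ} (ρs : Fin j → {x // x ∈ R})
    (x : Vec d) : enorm (Dmulti (fun i => (ρs i : Vec d)) u x) ≤ DnormJ R j u x :=
  le_sqrt_sum_sq (fun ρs : Fin j → {x // x ∈ R} => enorm (Dmulti (fun i => (ρs i : Vec d)) u x))
    (Finset.mem_univ ρs)

theorem abs_iterDiff_pullback_le_DnormJ (u : Vec d → Vec N) {l : List Λ}
    (hl : ∀ e ∈ l, φ e ∈ R) (i : Fin N) (z : Λ) :
    |iterDiff l (pullback φ u i) z| ≤ DnormJ R l.length u (φ z) := by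
  have h := Dmulti_map φ l.get u z i
  rw [List.ofFn_get] at h
  rw [← h]
  exact (abs_apply_le_enorm _ i).trans
    (enorm_Dmulti_le_DnormJ u (fun m => ⟨φ (l.get m), hl _ (l.get_mem m)⟩) (φ z))

theorem DnormJ_le_sum_abs_iterDiff {j : ℕ} {τ : {x // x ∈ R} → Λ} (hτ : ∀ ρ, φ (τ ρ) = ρ)
    (u : Vec d → Vec N) (z : Λ) :
    DnormJ R j u (φ z) ≤ ∑ ρs : Fin j → {x // x ∈ R}, ∑ i,
      |iterDiff (List.ofFn fun m => τ (ρs m)) (pullback φ u i) z| := by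
  refine (sqrt_sum_sq_le_sum _ fun ρs => enorm_nonneg _).trans
    (Finset.sum_le_sum fun ρs _ => (enorm_le_sum_abs _).trans_eq ?_)
  simp only [← Dmulti_map, hτ]

theorem DnormJ_col_le_DnormJmat (j : ℕ) (G : Vec d → Fin N → Fin N → ℝ) (k : Fin N)
    (x : Vec d) : DnormJ R j (col G k) x ≤ DnormJmat R j G x :=
  le_sqrt_sum_sq (fun k => DnormJ R j (col G k) x) (Finset.mem_univ k)

end Pullback

section LatticeChart

variable {Λ : Type*} {d N : ℕ}

/-- `φ` parametrizes the lattice `Aℤ^d` by a normed group, distorting `⟨·⟩` by at most a constant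
factor; lattice decay bounds may then be stated in `Λ`. -/
structure IsLatticeChart [SeminormedAddCommGroup Λ] (A : Matrix (Fin d) (Fin d) ℝ)
    (φ : Λ →+ Vec d) : Prop where
  injective : Function.Injective φ
  range_eq : Set.range φ = Lattice d A
  comparable : ∃ K : ℝ, 1 ≤ K ∧ ∀ z, bracket z ≤ K * ang (φ z) ∧ ang (φ z) ≤ K * bracket z

/-- `F(ℓ) ≲ ⟨ℓ⟩^a (log⟨ℓ⟩)^β` on the lattice `Aℤ^d`. -/
def HasLatticeBound (A : Matrix (Fin d) (Fin d) ℝ) (F : Vec d → ℝ) (a : ℝ) (β : ℕ) : Prop :=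
  ∃ c : ℝ, ∀ z : Fin d → ℤ, F (latticePt d A z) ≤
    c * ang (latticePt d A z) ^ a * Real.log (ang (latticePt d A z)) ^ β

theorem rpow_mul_log_pow_eq_decayRate (n β : ℕ) {τ : ℝ} (hτ : 2 ≤ τ) :
    τ ^ (-(n : ℝ)) * Real.log τ ^ β = decayRate n β τ := by
  rw [Real.rpow_neg (by linarith), Real.rpow_natCast, decayRate, inv_mul_eq_div]

namespace IsLatticeChart

variable [SeminormedAddCommGroup Λ] {A : Matrix (Fin d) (Fin d) ℝ} {φ : Λ →+ Vec d}
  {F : Vec d → ℝ} {f : Λ → ℝ} {n β : ℕ}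

theorem mem_decay_of_abs_le (hφ : IsLatticeChart A φ) (hF : HasLatticeBound A F (-(n : ℝ)) β)
    (hf : ∀ z, |f z| ≤ F (φ z)) : f ∈ decay Λ n β := by
  obtain ⟨c, hc⟩ := hF
  obtain ⟨K, hK, hcomp⟩ := hφ.comparable
  obtain ⟨C, -, hC⟩ := decayRate_le_of_comparable n β hK
  refine mem_decay (C := |c| * C) fun z => ?_
  obtain ⟨y, hy⟩ : φ z ∈ Lattice d A := hφ.range_eq ▸ Set.mem_range_self z
  have hang := two_le_ang (φ z)
  calc |f z| ≤ c * decayRate n β (ang (φ z)) := by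
        rw [← rpow_mul_log_pow_eq_decayRate n β hang, ← mul_assoc, ← hy]
        exact (hf z).trans (hy ▸ hc y)
    _ ≤ |c| * (C * decayRate n β (bracket z)) :=
        mul_le_mul (le_abs_self c) (hC _ _ hang (two_le_bracket z) (hcomp z).2 (hcomp z).1)
          (decayRate_nonneg n β hang) (abs_nonneg c)
    _ = |c| * C * decayRate n β (bracket z) := (mul_assoc _ _ _).symm

theorem hasLatticeBound_of_le (hφ : IsLatticeChart A φ) (hf : f ∈ decay Λ n β)
    (hF : ∀ z, F (φ z) ≤ f z) : HasLatticeBound A F (-(n : ℝ)) β := by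
  obtain ⟨c, hc0, hc⟩ := exists_bound_of_mem_decay hf
  obtain ⟨K, hK, hcomp⟩ := hφ.comparable
  obtain ⟨C, -, hC⟩ := decayRate_le_of_comparable n β hK
  refine ⟨c * C, fun y => ?_⟩
  obtain ⟨z, hz⟩ : latticePt d A y ∈ Set.range φ := hφ.range_eq ▸ Set.mem_range_self y
  have hang := two_le_ang (φ z)
  rw [← hz, mul_assoc, rpow_mul_log_pow_eq_decayRate n β hang, mul_assoc]
  calc F (φ z) ≤ c * decayRate n β (bracket z) := (hF z).trans ((le_abs_self _).trans (hc z))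
    _ ≤ c * (C * decayRate n β (ang (φ z))) :=
        mul_le_mul_of_nonneg_left
          (hC _ _ (two_le_bracket z) hang (hcomp z).1 (hcomp z).2) hc0

variable {R : Finset (Vec d)}

theorem hasLatticeBound_DnormJ_iff (hφ : IsLatticeChart A φ) (hR : ∀ ρ ∈ R, ρ ∈ Lattice d A)
    (hspan : AddSubgroup.closure (φ ⁻¹' R) = ⊤) {j : ℕ} {u : Vec d → Vec N} :
    HasLatticeBound A (DnormJ R j u) (-(n : ℝ)) β ↔
      ∀ l : List Λ, l.length = j → ∀ i, iterDiff l (pullback φ u i) ∈ decay Λ n β := by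
  constructor
  · intro h l hl i
    refine (shiftInvariant_decay n β).iterDiff_mem_of_closure_eq_top hspan ?_ hl
    rintro l' rfl hl'
    exact hφ.mem_decay_of_abs_le h (abs_iterDiff_pullback_le_DnormJ u hl' i)
  · intro h
    rw [← hφ.range_eq] at hR
    choose τ hτ using fun ρ : {x // x ∈ R} => hR ρ ρ.2
    have habs : ∀ {f : Λ → ℝ}, f ∈ decay Λ n β → (fun z => |f z|) ∈ decay Λ n β := fun hf => by
      obtain ⟨c, -, hc⟩ := exists_bound_of_mem_decay hf
      exact mem_decay fun z => (abs_abs _).trans_le (hc z)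
    have hsum : (∑ ρs : Fin j → {x // x ∈ R}, ∑ i, fun z =>
        |iterDiff (List.ofFn fun m => τ (ρs m)) (pullback φ u i) z|) ∈ decay Λ n β :=
      Submodule.sum_mem _ fun ρs _ => Submodule.sum_mem _ fun i _ =>
        habs (h _ List.length_ofFn i)
    refine hφ.hasLatticeBound_of_le hsum fun z => ?_
    simpa only [Finset.sum_apply] using DnormJ_le_sum_abs_iterDiff hτ u z

theorem tendsto_diff_pullback (hφ : IsLatticeChart A φ) (hspan : AddSubgroup.closure (φ ⁻¹' R) = ⊤)
    {u : Vec d → Vec N}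
    (hu : ∀ ρ ∈ R, Tendsto (fun z => D1 ρ u (latticePt d A z)) cofinite (𝓝 0)) (i : Fin N) (e : Λ) :
    Tendsto (diff e (pullback φ u i)) cofinite (𝓝 0) := by
  have hpt : ∀ z, φ z ∈ Lattice d A := fun z => hφ.range_eq ▸ Set.mem_range_self z
  choose κ hκ using hpt
  have hκinj : Function.Injective κ := fun x y h => hφ.injective (by rw [← hκ, ← hκ, h])
  refine shiftInvariant_zeroAtFilterSubmodule.diff_mem_of_closure_eq_top hspan (fun ρ hρ => ?_) e
  have h := (tendsto_pi_nhds.1 (hu (φ ρ) hρ) i).comp hκinj.tendsto_cofinite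
  simp only [Function.comp_def, hκ, D1_map] at h
  exact h

theorem isFundamentalSolution_pullback [DecidableEq Λ] (hφ : IsLatticeChart A φ)
    (hR : ∀ ρ ∈ R, ρ ∈ Lattice d A) {C : Vec d → Vec d → Fin N → Fin N → ℝ}
    {G : Vec d → Fin N → Fin N → ℝ} (hG : IsLatticeGreen d N A R C G) :
    IsFundamentalSolution (latticeSystem (R.preimage φ hφ.injective.injOn)
      fun σ ρ => Matrix.of (C (φ σ) (φ ρ))) fun j k => pullback φ (col G k) j := by
  intro k
  rw [← hφ.range_eq] at hR
  change latticeSystem _ _ (pullback φ (col G k)) = _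
  rw [← pullback_Hop hφ.injective hR]
  funext i z
  obtain ⟨y, hy⟩ : φ z ∈ Lattice d A := hφ.range_eq ▸ Set.mem_range_self z
  rw [pullback, ← hy, hG.1 k y, hy]
  simp only [map_eq_zero_iff φ hφ.injective]
  obtain rfl | hi := eq_or_ne i k <;> obtain rfl | hz := eq_or_ne z 0 <;> simp [*]

theorem isDecayingKernel_diff_pullback (hφ : IsLatticeChart A φ) (hR : ∀ ρ ∈ R, ρ ∈ Lattice d A)
    (hspan : AddSubgroup.closure (φ ⁻¹' R) = ⊤) {C : Vec d → Vec d → Fin N → Fin N → ℝ}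
    {G : Vec d → Fin N → Fin N → ℝ} (hG : IsLatticeGreen d N A R C G) (hn : n + 1 = d)
    (e : Λ) (j k : Fin N) : IsDecayingKernel n (diff e (pullback φ (col G k) j)) := by
  intro l
  rw [← diff_iterDiff, ← iterDiff_cons]
  refine (hφ.hasLatticeBound_DnormJ_iff hR hspan).1 ?_ (e :: l) rfl j
  obtain ⟨c, hc⟩ := hG.2 (l.length + 1) (Nat.le_add_left _ _)
  refine ⟨c, fun z => (DnormJ_col_le_DnormJmat _ G k _).trans ((hc z).trans_eq ?_)⟩
  have hd : (d : ℝ) = n + 1 := by exact_mod_cast hn.symm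
  rw [pow_zero, mul_one, hd]
  congr 2
  push_cast
  ring

end IsLatticeChart

/-- The parametrization `z ↦ ∑ i, z i • s i` of the lattice with basis `s`. -/
def basisChart (s : Fin d → Vec d) : (Fin d → ℤ) →+ Vec d :=
  (Fintype.linearCombination ℤ s).toAddMonoidHom

theorem basisChart_apply (s : Fin d → Vec d) (z : Fin d → ℤ) :
    basisChart s z = ∑ i, (z i : ℝ) • s i := by
  simp only [basisChart, LinearMap.toAddMonoidHom_coe, Fintype.linearCombination_apply,
    Int.cast_smul_eq_zsmul]

theorem basisChart_basisVec (s : Fin d → Vec d) (i : Fin d) : basisChart s (basisVec i) = s i := by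
  simp only [basisChart, LinearMap.toAddMonoidHom_coe, basisVec,
    Fintype.linearCombination_apply_single, one_smul]

theorem exists_bracket_comparable_basisChart {s : Fin d → Vec d} (hs : LinearIndependent ℝ s) :
    ∃ K : ℝ, 1 ≤ K ∧ ∀ z, bracket z ≤ K * ang (basisChart s z) ∧
      ang (basisChart s z) ≤ K * bracket z := by
  let L : (Fin d → ℝ) →ₗ[ℝ] EuclideanSpace ℝ (Fin d) :=
    (WithLp.linearEquiv 2 ℝ (Vec d)).symm ∘ₗ Fintype.linearCombination ℝ s
  have hker : LinearMap.ker L = ⊥ := by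
    rw [LinearEquiv.ker_comp]
    exact LinearMap.ker_eq_bot.2 hs.fintypeLinearCombination_injective
  have hL : ∀ z : Fin d → ℤ, ‖L fun i => (z i : ℝ)‖ = enorm (basisChart s z) := fun z => by
    rw [enorm_eq_norm_toLp, basisChart_apply]
    rfl
  have hcast : ∀ z : Fin d → ℤ, ‖fun i => (z i : ℝ)‖ = ‖z‖ := fun z => by
    simp only [Pi.norm_def, Int.norm_cast_real, nnnorm]
  obtain ⟨K, -, hK⟩ := LinearMap.exists_antilipschitzWith L hker
  set M := ‖LinearMap.toContinuousLinearMap L‖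
  have hM : 0 ≤ M := norm_nonneg _
  refine ⟨1 + K + M, by linarith [K.coe_nonneg], fun z => ?_⟩
  have hlow := hK.le_mul_dist (fun i => (z i : ℝ)) 0
  have hup := (LinearMap.toContinuousLinearMap L).le_opNorm fun i => (z i : ℝ)
  rw [map_zero, dist_zero_right, dist_zero_right, hL, hcast] at hlow
  rw [LinearMap.coe_toContinuousLinearMap', hL, hcast] at hup
  have hz := norm_nonneg z
  have he := enorm_nonneg (basisChart s z)
  unfold bracket ang
  constructor <;> nlinarith [K.coe_nonneg]

theorem range_basisChart {A : Matrix (Fin d) (Fin d) ℝ} {s : Fin d → Vec d}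
    (hslat : ∀ i, s i ∈ Lattice d A)
    (hsspan : ∀ x ∈ Lattice d A, ∃ z : Fin d → ℤ, x = ∑ i, (z i : ℝ) • s i) :
    Set.range (basisChart s) = Lattice d A := by
  refine Set.Subset.antisymm (Set.range_subset_iff.2 fun z => ?_) fun x hx => ?_
  · choose t ht using hslat
    refine ⟨∑ i, z i • t i, ?_⟩
    funext a
    simp only [basisChart_apply, ← ht, latticePt, Finset.sum_apply, Pi.smul_apply, smul_eq_mul,
      Int.cast_sum, Int.cast_mul, Finset.mul_sum, mul_left_comm (A a _)]
    exact Finset.sum_comm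
  · obtain ⟨z, rfl⟩ := hsspan x hx
    exact ⟨z, basisChart_apply s z⟩

theorem isLatticeChart_basisChart {A : Matrix (Fin d) (Fin d) ℝ} {s : Fin d → Vec d}
    (hslat : ∀ i, s i ∈ Lattice d A) (hsind : LinearIndependent ℝ s)
    (hsspan : ∀ x ∈ Lattice d A, ∃ z : Fin d → ℤ, x = ∑ i, (z i : ℝ) • s i) :
    IsLatticeChart A (basisChart s) where
  injective := (hsind.restrict_scalars' ℤ).fintypeLinearCombination_injective
  range_eq := range_basisChart hslat hsspan
  comparable := exists_bracket_comparable_basisChart hsind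

end LatticeChart

section MultipoleExpansion

variable {d N : ℕ}

theorem pullback_sub_multipole (s : Fin d → Vec d) (p : ℕ)
    (b : (i : ℕ) → Fin N → (Fin i → Fin d) → ℝ) (G : Vec d → Fin N → Fin N → ℝ)
    (u : Vec d → Vec N) :
    pullback (basisChart s) (fun ℓ => u ℓ -
      ∑ i ∈ Finset.range p, ∑ k : Fin N, multipole d N s i (b i k) (col G k) ℓ) =
      multipoleRemainder p b (fun j k => pullback (basisChart s) (col G k) j)
        (pullback (basisChart s) u) := by
  funext j z
  have hterm : ∀ i k, multipole d N s i (b i k) (col G k) (basisChart s z) j =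
      ∑ σ, b i k σ * iterDiff ((List.ofFn σ).map basisVec)
        (pullback (basisChart s) (col G k) j) z := fun i k => by
    simp only [multipole, ← basisChart_basisVec s, Finset.sum_apply, Pi.smul_apply, smul_eq_mul,
      Dmulti_map, List.map_ofFn, Function.comp_def]
  simp only [pullback, multipoleRemainder, Pi.sub_apply, Finset.sum_apply, Pi.smul_apply,
    smul_eq_mul, hterm]

theorem InH1.tendsto_D1 {A : Matrix (Fin d) (Fin d) ℝ} {R : Finset (Vec d)} {u : Vec d → Vec N}
    (hu : InH1 A R u) {ρ : Vec d} (hρ : ρ ∈ R) :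
    Tendsto (fun z => D1 ρ u (latticePt d A z)) cofinite (𝓝 0) := by
  have hsqrt : Tendsto (fun z => √(Dnorm1Sq R u (latticePt d A z))) cofinite (𝓝 0) := by
    simpa only [Real.sqrt_zero] using hu.tendsto_cofinite_zero.sqrt
  refine tendsto_pi_nhds.2 fun i => squeeze_zero_norm (fun z => ?_) hsqrt
  exact (abs_apply_le_enorm _ i).trans
    (le_sqrt_sum_sq (fun ρ => enorm (D1 ρ u (latticePt d A z))) hρ)

theorem IsLatticeChart.iterDiff_pullback_mem_decay {Λ : Type*} [SeminormedAddCommGroup Λ]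
    {A : Matrix (Fin d) (Fin d) ℝ} {φ : Λ →+ Vec d} (hφ : IsLatticeChart A φ)
    {R : Finset (Vec d)} (hR : ∀ ρ ∈ R, ρ ∈ Lattice d A)
    (hspan : AddSubgroup.closure (φ ⁻¹' R) = ⊤) {F : Vec d → Vec N} {n j β : ℕ}
    (hF : HasLatticeBound A (fun ℓ => enorm (F ℓ)) (-(n : ℝ)) β)
    (hDF : ∀ m : ℕ, 1 ≤ m → m ≤ j → HasLatticeBound A (DnormJ R m F) (-(n : ℝ) - m) β)
    (i : Fin N) {l : List Λ} (hl : l.length ≤ j) :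
    iterDiff l (pullback φ F i) ∈ decay Λ (n + l.length) β := by
  obtain rfl | hne := eq_or_ne l []
  · exact hφ.mem_decay_of_abs_le hF fun z => abs_apply_le_enorm _ i
  · have h := hDF l.length (List.length_pos_iff.2 hne) hl
    rw [← neg_add', ← Nat.cast_add] at h
    exact (hφ.hasLatticeBound_DnormJ_iff hR hspan).1 h l rfl i

theorem multipole_expansion_remainder_general (hd : 2 ≤ d) (A : Matrix (Fin d) (Fin d) ℝ)
    (R : Finset (Vec d)) (hRlat : ∀ ρ ∈ R, ρ ∈ Lattice d A)
    (hRspan : ∀ x ∈ Lattice d A, ∃ c : Vec d → ℤ, x = ∑ ρ ∈ R, (c ρ : ℝ) • ρ)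
    (C : Vec d → Vec d → Fin N → Fin N → ℝ) (hCsym : ∀ σ ρ i j, C σ ρ i j = C ρ σ j i)
    (G : Vec d → Fin N → Fin N → ℝ) (hG : IsLatticeGreen d N A R C G)
    (s : Fin d → Vec d) (hslat : ∀ i, s i ∈ Lattice d A) (hsind : LinearIndependent ℝ s)
    (hsspan : ∀ x ∈ Lattice d A, ∃ z : Fin d → ℤ, x = ∑ i, (z i : ℝ) • s i)
    (u : Vec d → Vec N)
    (hu : ∀ ρ ∈ R, Tendsto (fun z => D1 ρ u (latticePt d A z)) cofinite (𝓝 0)) (p α : ℕ)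
    (hbound : HasLatticeBound A (fun ℓ => enorm (Hop d N R C u ℓ)) (-(d : ℝ) - p) α) :
    ∃ b : (i : ℕ) → Fin N → (Fin i → Fin d) → ℝ, (∀ i k, SymArr (b i k)) ∧
      ∀ j : ℕ, 1 ≤ j →
        (∀ m : ℕ, 1 ≤ m → m ≤ j - 2 →
          HasLatticeBound A (DnormJ R m (Hop d N R C u)) (-(d : ℝ) - p - m) α) →
        HasLatticeBound A
          (DnormJ R j fun ℓ => u ℓ -
            ∑ i ∈ Finset.range p, ∑ k : Fin N, multipole d N s i (b i k) (col G k) ℓ)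
          (2 - (d : ℝ) - p - j) (α + 1) := by
  obtain ⟨n, hn⟩ : ∃ n, n + 1 = d := ⟨d - 1, Nat.sub_add_cancel (by omega)⟩
  have hφ := isLatticeChart_basisChart hslat hsind hsspan
  have hRφ : ∀ ρ ∈ R, ρ ∈ Set.range (basisChart s) := hφ.range_eq ▸ hRlat
  have hspan := closure_preimage_eq_top hφ.injective hRφ
    fun z => hRspan _ (hφ.range_eq ▸ Set.mem_range_self z)
  have hH := pullback_Hop hφ.injective hRφ C u
  rw [← neg_add', ← Nat.cast_add] at hbound ⊢
  have hforce : ∀ j, pullback (basisChart s) (Hop d N R C u) j ∈ decay _ (d + p) α := fun j =>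
    hφ.mem_decay_of_abs_le hbound fun z => abs_apply_le_enorm _ j
  rw [hH] at hforce
  obtain ⟨b, hb, hW⟩ :=
    (hφ.isFundamentalSolution_pullback hRlat hG).exists_multipoleRemainder_mem_decay
      (fun σ ρ => Matrix.ext fun i j => hCsym _ _ j i) hn (by omega)
      (fun e j k => hφ.isDecayingKernel_diff_pullback hRlat hspan hG hn e j k)
      (fun j e => hφ.tendsto_diff_pullback hspan hu j e) hforce
  refine ⟨b, hb, fun j hj hDH => ?_⟩
  have hexp : (2 : ℝ) - d - p - j = -((n + p + (j - 1) : ℕ) : ℝ) := by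
    rw [← hn]
    push_cast [hj]
    ring
  rw [hexp, hφ.hasLatticeBound_DnormJ_iff hRlat hspan, pullback_sub_multipole]
  rintro l rfl k
  exact hW l (List.length_pos_iff.1 hj)
    (fun i l' hl' => hH ▸ hφ.iterDiff_pullback_mem_decay hRlat hspan hbound hDH i hl') k

end MultipoleExpansion

/-- Theorem: truncated multipole expansion with localized remainder. -/
theorem multipole_expansion_remainder
    (d N : ℕ) (hd : 2 ≤ d)
    (A : Matrix (Fin d) (Fin d) ℝ) (hA : IsUnit A.det)
    (R : Finset (Vec d)) (hR0 : (0 : Vec d) ∉ R)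
    (hRlat : ∀ ρ ∈ R, ρ ∈ Lattice d A)
    (hRsym : ∀ ρ ∈ R, -ρ ∈ R)
    (hRspan : ∀ x ∈ Lattice d A, ∃ c : Vec d → ℤ, x = ∑ ρ ∈ R, (c ρ : ℝ) • ρ)
    (C : Vec d → Vec d → Fin N → Fin N → ℝ)
    (hCsym : ∀ σ ρ i j, C σ ρ i j = C ρ σ j i)
    (hCpt : ∀ σ ρ, C σ ρ = C (-σ) (-ρ))
    (hstab : IsStable d N A R C)
    (G : Vec d → Fin N → Fin N → ℝ) (hG : IsLatticeGreen d N A R C G)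
    (s : Fin d → Vec d) (hslat : ∀ i, s i ∈ Lattice d A)
    (hsind : LinearIndependent ℝ s)
    (hsspan : ∀ x ∈ Lattice d A, ∃ z : Fin d → ℤ, x = ∑ i, (z i : ℝ) • s i)
    (u : Vec d → Vec N) (hu : InH1 A R u)
    (p α : ℕ) (c : ℝ) (hc : 0 < c)
    (hbound : ∀ z : Fin d → ℤ,
      enorm (Hop d N R C u (latticePt d A z)) ≤
        c * ang (latticePt d A z) ^ (-(d : ℝ) - p) *
          Real.log (ang (latticePt d A z)) ^ α) :
    ∃ b : (i : ℕ) → Fin N → (Fin i → Fin d) → ℝ,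
      (∀ (i : ℕ) (k : Fin N), SymArr (b i k)) ∧
      (∀ j : ℕ, j = 1 ∨ j = 2 → ∃ Cj : ℝ, ∀ z : Fin d → ℤ,
          DnormJ R j
            (fun ℓ => u ℓ -
              ∑ i ∈ Finset.range p, ∑ k : Fin N, multipole d N s i (b i k) (col G k) ℓ)
            (latticePt d A z) ≤
            Cj * ang (latticePt d A z) ^ ((2 : ℝ) - d - p - j) *
              Real.log (ang (latticePt d A z)) ^ (α + 1)) ∧
      (∀ j : ℕ, 3 ≤ j →
        (∀ m : ℕ, 1 ≤ m → m ≤ j - 2 → ∀ z : Fin d → ℤ,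
            DnormJ R m (Hop d N R C u) (latticePt d A z) ≤
              c * ang (latticePt d A z) ^ (-(d : ℝ) - p - m) *
                Real.log (ang (latticePt d A z)) ^ α) →
        ∃ Cj : ℝ, ∀ z : Fin d → ℤ,
          DnormJ R j
            (fun ℓ => u ℓ -
              ∑ i ∈ Finset.range p, ∑ k : Fin N, multipole d N s i (b i k) (col G k) ℓ)
            (latticePt d A z) ≤
            Cj * ang (latticePt d A z) ^ ((2 : ℝ) - d - p - j) *
              Real.log (ang (latticePt d A z)) ^ (α + 1)) := by
  obtain ⟨b, hb, hw⟩ := multipole_expansion_remainder_general hd A R hRlat hRspan C hCsym G hG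
    s hslat hsind hsspan u (fun _ hρ => InH1.tendsto_D1 hu hρ) p α ⟨c, hbound⟩
  exact ⟨b, hb, fun j hj => hw j (by omega) fun m _ _ => by omega,
    fun j hj hDH => hw j (by omega) fun m hm hmj => ⟨c, hDH m hm hmj⟩⟩

end Defect
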